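/- arXiv:1902.04937 — 2 statements merged into one kernel-verified Lean document; each statement's English description precedes it below -/
import Mathlib

section
/- There exists C > 0, depending on Γ_D but independent of how the mesh intersects the boundary, such that for every element K ∈ M_{0,h} and every v ∈ H¹(K), ‖v‖²_{L²(Γ_K)} ≤ C( ‖h^{−1/2} v‖²_{L²(K)} + ‖h^{1/2} ∇v‖²_{L²(K)} ), where Γ_K = Γ_D ∩ cl(K). -/
open Set Metric MeasureTheory
open scoped InnerProductSpace NNReal ENNReal

noncomputable section

/-- Euclidean space `ℝᵈ`. -/
abbrev Euc (d : ℕ) : Type := EuclideanSpace ℝ (Fin d)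

/-- The open parametric unit cube `(0,1)ᵈ`. -/
def unitCube (d : ℕ) : Set (Euc d) := {x : Euc d | ∀ i, x i ∈ Ioo (0 : ℝ) 1}

/-- `Q ⊆ ℝᵈ` is an open axis-aligned box. -/
def IsBox {d : ℕ} (Q : Set (Euc d)) : Prop :=
  ∃ a b : Fin d → ℝ, (∀ i, a i < b i) ∧ Q = {x : Euc d | ∀ i, x i ∈ Ioo (a i) (b i)}

/-- Tensor-product polynomial functions of coordinate degree at most `p`
(the space `Q_p(ℝᵈ)`). -/
def IsQPoly {d : ℕ} (p : ℕ) (f : Euc d → ℝ) : Prop :=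
  ∃ P : MvPolynomial (Fin d) ℝ, (∀ i, P.degreeOf i ≤ p) ∧
    ∀ x : Euc d, f x = MvPolynomial.eval (fun i => x i) P

/-- The surface measure: the `(d-1)`-dimensional Hausdorff measure on `ℝᵈ`. -/
def sMeas (d : ℕ) : Measure (Euc d) := μH[(d : ℝ) - 1]

/-- The geometric setting of isogeometric analysis on a trimmed domain:
an untrimmed patch `Ω₀ = F((0,1)ᵈ)` described by a bi-Lipschitz map `F`,
a trimmed (Lipschitz) computational domain `Ω = Ω₀ \ cl(Ω₁)`, the trimming
curve `Γ_trim = ∂Ω ∩ ∂Ω₁`, a Dirichlet part `Γ_D ⊆ ∂Ω` with outward unit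
normal `nrm`. -/
structure Geom (d : ℕ) : Type where
  /-- untrimmed physical domain -/
  Ω₀ : Set (Euc d)
  /-- trimmed-away region -/
  Ω₁ : Set (Euc d)
  /-- trimmed computational domain -/
  Ω : Set (Euc d)
  /-- Dirichlet boundary -/
  ΓD : Set (Euc d)
  /-- trimming curve -/
  Γtrim : Set (Euc d)
  /-- isogeometric parametrization -/
  F : Euc d → Euc d
  /-- inverse of the parametrization -/
  Finv : Euc d → Euc d
  /-- outward unit normal to `∂Ω` -/
  nrm : Euc d → Euc d
  /-- bi-Lipschitz constant of `F` -/
  biLip : ℝ≥0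
  Ω₀_open : IsOpen Ω₀
  trim_def : Ω = Ω₀ \ closure Ω₁
  Ω_open : IsOpen Ω
  Γtrim_def : Γtrim = frontier Ω ∩ frontier Ω₁
  ΓD_sub : ΓD ⊆ frontier Ω
  nrm_unit : ∀ x ∈ frontier Ω, ‖nrm x‖ = 1
  F_image : F '' unitCube d = Ω₀
  F_leftInv : ∀ x ∈ closure (unitCube d), Finv (F x) = x
  F_rightInv : ∀ y ∈ closure Ω₀, F (Finv y) = y
  F_lip : LipschitzOnWith biLip F (closure (unitCube d))
  Finv_lip : LipschitzOnWith biLip Finv (closure Ω₀)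
  /-- `Ω` is a Lipschitz domain: uniform interior cone condition. -/
  lipschitz_bdry : ∀ x ∈ frontier Ω, ∃ (e : Euc d) (r lam : ℝ),
    ‖e‖ = 1 ∧ 0 < r ∧ 0 < lam ∧
    ∀ y ∈ Metric.ball x r ∩ closure Ω, ∀ t ∈ Ioo (0 : ℝ) r,
      Metric.ball (y + t • e) (lam * t) ⊆ Ω

namespace Geom

variable {d : ℕ} (G : Geom d)

/-- The physical element `K = F(Q)` associated with a parametric element `Q`. -/
def phys (Q : Set (Euc d)) : Set (Euc d) := G.F '' Q

/-- `Γ_K = Γ_D ∩ cl(K)` for the physical element `K = F(Q)`. -/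
def ΓK (Q : Set (Euc d)) : Set (Euc d) := G.ΓD ∩ closure (G.phys Q)

/-- The normal derivative `∂u/∂n = ∇u ⋅ n`. -/
def dn (u : Euc d → ℝ) (x : Euc d) : ℝ := ⟪gradient u x, G.nrm x⟫_ℝ

end Geom

/-- A trimmed isogeometric Bézier mesh (of a given size level) together with the
isogeometric spline space `Ṽ_h` of degree `p`:  `pMesh` is the (active) parametric
Bézier mesh, `pCut` the family of elements cut by the trimming curve, `pGood` the
family of good elements (volume fraction at least `θ`), `nb` a choice of good
neighbor, `hsz` the piecewise-constant mesh-size function and `hmax` the global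
mesh size.  `Cshape` is the shape-regularity constant, `Cnb` the neighbor-distance
constant and `CΓ` the constant in the assumption `|Γ_K| ≤ CΓ h_K^{d-1}`. -/
structure Mesh (d p : ℕ) (G : Geom d) (θ Cshape Cnb CΓ : ℝ) : Type where
  pMesh : Finset (Set (Euc d))
  pCut : Finset (Set (Euc d))
  pGood : Finset (Set (Euc d))
  nb : Set (Euc d) → Set (Euc d)
  hsz : Euc d → ℝ
  hmax : ℝ
  Vh : Submodule ℝ (Euc d → ℝ)
  mesh_boxes : ∀ Q ∈ pMesh, IsBox Q
  mesh_sub : ∀ Q ∈ pMesh, Q ⊆ unitCube d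
  mesh_active : ∀ Q ∈ pMesh, (Q ∩ G.Finv '' G.Ω).Nonempty
  mesh_cover : G.Finv '' G.Ω ⊆ ⋃ Q ∈ pMesh, closure Q
  /-- shape regularity: each edge of an element is comparable to its diameter -/
  shape_reg : ∀ Q ∈ pMesh, ∀ a b : Fin d → ℝ,
    Q = {x : Euc d | ∀ i, x i ∈ Ioo (a i) (b i)} → ∀ i, Cshape * diam Q ≤ b i - a i
  shape_pos : 0 < Cshape
  /-- `F` and `F⁻¹` are smooth on the closure of every element -/
  F_smooth : ∀ Q ∈ pMesh, ContDiffOn ℝ (⊤ : ℕ∞) G.F (closure Q)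
  Finv_smooth : ∀ Q ∈ pMesh, ContDiffOn ℝ (⊤ : ℕ∞) G.Finv (closure (G.phys Q))
  cut_sub : pCut ⊆ pMesh
  /-- `G_h` consists exactly of the elements cut by the trimming curve -/
  cut_iff : ∀ Q ∈ pMesh, (Q ∈ pCut ↔ (closure (G.phys Q) ∩ G.Γtrim).Nonempty)
  good_sub : pGood ⊆ pMesh
  θ_mem : θ ∈ Ioc (0 : ℝ) 1
  /-- good elements: volume fraction of `Ω̂ ∩ Q` in `Q` is at least `θ` -/
  good_iff : ∀ Q ∈ pMesh,
    (Q ∈ pGood ↔ θ * (volume Q).toReal ≤ (volume (G.Finv '' G.Ω ∩ Q)).toReal)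
  /-- every (bad) element has a chosen good neighbor -/
  nb_good : ∀ Q ∈ pMesh, nb Q ∈ pGood
  nb_self : ∀ Q ∈ pGood, nb Q = Q
  /-- the chosen neighbor is at distance at most `Cnb ⬝ diam Q` -/
  nb_near : ∀ Q ∈ pMesh, ∃ x ∈ Q, ∃ y ∈ nb Q, dist x y ≤ Cnb * diam Q
  hsz_pos : ∀ x, 0 < hsz x
  hsz_eq : ∀ Q ∈ pMesh, ∀ x ∈ G.phys Q, hsz x = diam (G.phys Q)
  hmax_pos : 0 < hmax
  hmax_ge : ∀ Q ∈ pMesh, diam (G.phys Q) ≤ hmax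
  /-- splines are smooth on the closure of every element -/
  vh_smooth : ∀ v ∈ Vh, ∀ Q ∈ pMesh, ContDiffOn ℝ (⊤ : ℕ∞) v (closure (G.phys Q))
  /-- the pull-back of a spline coincides with a `Q_p` polynomial on each element -/
  vh_poly : ∀ v ∈ Vh, ∀ Q ∈ pMesh, ∃ f, IsQPoly p f ∧ EqOn (v ∘ G.F) f Q
  /-- Assumption: `|Γ_K| ≤ CΓ h_K^{d-1}` -/
  ΓK_bound : ∀ Q ∈ pMesh,
    sMeas d (G.ΓK Q) ≤ ENNReal.ofReal (CΓ * diam (G.phys Q) ^ (d - 1))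

variable {d p : ℕ} {θ Cshape Cnb CΓ : ℝ}

/-- Squared `L²(A)` norm of the gradient. -/
def gradSq {d : ℕ} (A : Set (Euc d)) (u : Euc d → ℝ) : ℝ :=
  ∫ x in A, ‖gradient u x‖ ^ 2

/-- `L²(A)` norm of the gradient, `‖∇u‖_{L²(A)}`. -/
def gradL2 {d : ℕ} (A : Set (Euc d)) (u : Euc d → ℝ) : ℝ :=
  Real.sqrt (gradSq A u)

/-- The squared mesh-dependent norm
`‖u‖²_{1,h,Ω} = ‖∇u‖²_{L²(Ω)} + ‖h^{-1/2} u‖²_{L²(Γ_D)}`. -/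
def norm1hSq (G : Geom d) (M : Mesh d p G θ Cshape Cnb CΓ) (u : Euc d → ℝ) : ℝ :=
  gradSq G.Ω u + ∫ x in G.ΓD, u x ^ 2 / M.hsz x ∂(sMeas d)

/-- The mesh-dependent norm `‖u‖_{1,h,Ω}`. -/
def norm1h (G : Geom d) (M : Mesh d p G θ Cshape Cnb CΓ) (u : Euc d → ℝ) : ℝ :=
  Real.sqrt (norm1hSq G M u)

/-- The weighted flux norm `‖h^{1/2} g‖_{L²(Γ_K)}` on the element `K = F(Q)`. -/
def wFlux (G : Geom d) (M : Mesh d p G θ Cshape Cnb CΓ) (Q : Set (Euc d))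
    (g : Euc d → ℝ) : ℝ :=
  Real.sqrt (∫ x in G.ΓK Q, M.hsz x * g x ^ 2 ∂(sMeas d))

open Classical in
/-- `K' = K` if `K` is a good element, otherwise the chosen good neighbor of `K`. -/
def nbOr (G : Geom d) (M : Mesh d p G θ Cshape Cnb CΓ) (Q : Set (Euc d)) :
    Set (Euc d) :=
  if Q ∈ M.pGood then Q else M.nb Q

/-- The symmetric Nitsche bilinear form
`a_h(u,v) = ∫_Ω ∇u⋅∇v - ∫_{Γ_D} ∂u/∂n v - ∫_{Γ_D} u ∂v/∂n + β ∫_{Γ_D} h⁻¹ u v`. -/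
def ah (G : Geom d) (M : Mesh d p G θ Cshape Cnb CΓ) (β : ℝ) (u v : Euc d → ℝ) : ℝ :=
  (∫ x in G.Ω, ⟪gradient u x, gradient v x⟫_ℝ)
    - (∫ x in G.ΓD, G.dn u x * v x ∂(sMeas d))
    - (∫ x in G.ΓD, u x * G.dn v x ∂(sMeas d))
    + β * ∫ x in G.ΓD, u x * v x / M.hsz x ∂(sMeas d)

/-- The stabilized bilinear form
`ā_h(u,v) = ∫_Ω ∇u⋅∇v - ∫_{Γ_D} R(u) v - ∫_{Γ_D} u R(v) + β ∫_{Γ_D} h⁻¹ u v`. -/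
def abarh (G : Geom d) (M : Mesh d p G θ Cshape Cnb CΓ)
    (R : (Euc d → ℝ) → Euc d → ℝ) (β : ℝ) (u v : Euc d → ℝ) : ℝ :=
  (∫ x in G.Ω, ⟪gradient u x, gradient v x⟫_ℝ)
    - (∫ x in G.ΓD, R u x * v x ∂(sMeas d))
    - (∫ x in G.ΓD, u x * R v x ∂(sMeas d))
    + β * ∫ x in G.ΓD, u x * v x / M.hsz x ∂(sMeas d)

/-- `R` is the stabilization operator obtained by polynomial extension in the
parametric domain (Definition 6.2): on good cut elements it is the normal
derivative, on bad elements it is the normal derivative of the push-forward of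
the natural polynomial extension `𝓔(v̂|_{Q'})` from the good neighbor `Q'`. -/
def IsParamStab (G : Geom d) (M : Mesh d p G θ Cshape Cnb CΓ)
    (R : (Euc d → ℝ) → Euc d → ℝ) : Prop :=
  ∀ v ∈ M.Vh,
    (∀ Q ∈ M.pCut, Q ∈ M.pGood → ∀ x ∈ G.ΓK Q, R v x = G.dn v x) ∧
    (∀ Q ∈ M.pCut, Q ∉ M.pGood → ∃ q : Euc d → ℝ, IsQPoly p q ∧
      EqOn (v ∘ G.F) q (M.nb Q) ∧ ∀ x ∈ G.ΓK Q, R v x = G.dn (q ∘ G.Finv) x)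

/-- `R` is the stabilization operator obtained by `L²`-projection in the physical
domain (Definition 6.3): on good cut elements it is the normal derivative, on bad
elements it is the normal derivative of the natural polynomial extension of the
`L²(K')`-orthogonal projection of `v|_{K'}` onto `Q_p(K')`. -/
def IsPhysStab (G : Geom d) (M : Mesh d p G θ Cshape Cnb CΓ)
    (R : (Euc d → ℝ) → Euc d → ℝ) : Prop :=
  ∀ v ∈ M.Vh,
    (∀ Q ∈ M.pCut, Q ∈ M.pGood → ∀ x ∈ G.ΓK Q, R v x = G.dn v x) ∧
    (∀ Q ∈ M.pCut, Q ∉ M.pGood → ∃ q : Euc d → ℝ, IsQPoly p q ∧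
      (∀ r : Euc d → ℝ, IsQPoly p r → ∫ x in G.phys (M.nb Q), (v x - q x) * r x = 0) ∧
      ∀ x ∈ G.ΓK Q, R v x = G.dn q x)

/-- An abstract framework of (fractional) Sobolev norms `‖⋅‖_{H^s(A)}` together
with a bounded Sobolev–Stein extension operator from `Ω` (restricted to `Ω₀`). -/
structure Sob (d : ℕ) (Ω Ω₀ : Set (Euc d)) : Type where
  /-- `mem s A v` means `v ∈ H^s(A)` -/
  mem : ℝ → Set (Euc d) → (Euc d → ℝ) → Prop
  /-- `norm s A v` is `‖v‖_{H^s(A)}` -/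
  norm : ℝ → Set (Euc d) → (Euc d → ℝ) → ℝ
  norm_nonneg : ∀ s A v, 0 ≤ norm s A v
  mem_mono_set : ∀ s (A B : Set (Euc d)) v, A ⊆ B → mem s B v → mem s A v
  mem_mono_exp : ∀ s t (A : Set (Euc d)) v, s ≤ t → mem t A v → mem s A v
  norm_mono_set : ∀ s (A B : Set (Euc d)) v, A ⊆ B → norm s A v ≤ norm s B v
  norm_mono_exp : ∀ s t (A : Set (Euc d)) v, s ≤ t → mem t A v → norm s A v ≤ norm t A v
  /-- `H⁰ = L²` -/
  norm_zero : ∀ (A : Set (Euc d)) v, norm 0 A v = Real.sqrt (∫ x in A, v x ^ 2)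
  /-- the gradient seminorm is dominated by the `H¹` norm -/
  grad_le_one : ∀ (A : Set (Euc d)) v, mem 1 A v → gradL2 A v ≤ norm 1 A v
  /-- the Sobolev–Stein extension operator (its restriction to `Ω₀`) -/
  ext : (Euc d → ℝ) → Euc d → ℝ
  ext_eq : ∀ v, EqOn (ext v) v Ω
  ext_bound : ∀ s : ℝ, 0 ≤ s → ∃ C > (0 : ℝ), ∀ v, mem s Ω v →
    mem s Ω₀ (ext v) ∧ norm s Ω₀ (ext v) ≤ C * norm s Ω v

/-- The Laplacian of `u : ℝᵈ → ℝ`. -/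
def lapl {d : ℕ} (u : Euc d → ℝ) (x : Euc d) : ℝ :=
  ∑ i : Fin d, fderiv ℝ (fun y => fderiv ℝ u y (EuclideanSpace.single i 1)) x
    (EuclideanSpace.single i 1)

end

section TraceAux

open Set Metric MeasureTheory Measure
open scoped InnerProductSpace NNReal ENNReal

theorem vol_lip {d : ℕ} {L : ℝ≥0} {f : EuclideanSpace ℝ (Fin d) → EuclideanSpace ℝ (Fin d)}
    {s : Set (EuclideanSpace ℝ (Fin d))} (hf : LipschitzOnWith L f s) :
    volume (f '' s) ≤ (L : ℝ≥0∞) ^ d * volume s := by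
  have : IsAddHaarMeasure (μH[d] : Measure (EuclideanSpace ℝ (Fin d))) := by
    simpa using MeasureTheory.isAddHaarMeasure_hausdorffMeasure (E := EuclideanSpace ℝ (Fin d))
  have h := isAddLeftInvariant_eq_smul (volume : Measure (EuclideanSpace ℝ (Fin d))) μH[d]
  rw [h]
  simp only [Measure.smul_apply, ENNReal.smul_def, smul_eq_mul]
  have h2 := hf.hausdorffMeasure_image_le (d := d) (by positivity)
  rw [ENNReal.rpow_natCast] at h2
  calc _ ≤ _ := mul_le_mul_right h2 _
    _ = _ := by ring

/-- Lipschitz graph bound. -/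
theorem graph_bound {n : ℕ} (e : EuclideanSpace ℝ (Fin (n+1))) (he : ‖e‖ = 1)
    (S : Set (EuclideanSpace ℝ (Fin (n+1)))) (K : ℝ≥0)
    (hS : ∀ x ∈ S, ∀ y ∈ S, ‖y - x‖ ≤ K * ‖(y - x) - ⟪e, y - x⟫_ℝ • e‖)
    (z : EuclideanSpace ℝ (Fin (n+1))) (r : ℝ≥0) :
    μH[(n:ℝ)] (S ∩ closedBall z r) ≤ ((((n + 1 : ℕ) : ℝ≥0) * K * 2) ^ n : ℝ≥0) * (r : ℝ≥0∞) ^ n := by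
  classical
  have hf : Fact (Module.finrank ℝ (EuclideanSpace ℝ (Fin (n+1))) = n + 1) := ⟨by simp⟩
  have hfr : Module.finrank ℝ (ℝ ∙ e)ᗮ = n := Submodule.finrank_orthogonal_span_singleton (by
    intro h; simp [h] at he)
  let b := (stdOrthonormalBasis ℝ (ℝ ∙ e)ᗮ).reindex (finCongr hfr)
  let φ : EuclideanSpace ℝ (Fin (n+1)) → Fin n → ℝ := fun x i => ⟪(b i : EuclideanSpace ℝ (Fin (n+1))), x⟫_ℝ
  have hbe : ∀ i, ⟪(b i : EuclideanSpace ℝ (Fin (n+1))), e⟫_ℝ = 0 := fun i =>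
    Submodule.inner_left_of_mem_orthogonal (Submodule.mem_span_singleton_self e) (b i).2
  have hbn : ∀ i, ‖(b i : EuclideanSpace ℝ (Fin (n+1)))‖ = 1 := fun i => by
    rw [Submodule.norm_coe]; exact b.orthonormal.1 i
  have key : ∀ x, ‖x - ⟪e, x⟫_ℝ • e‖ ≤ (n+1) * ‖φ x‖ := by
    intro x
    have hm : x - ⟪e, x⟫_ℝ • e ∈ (ℝ ∙ e)ᗮ := by
      rw [Submodule.mem_orthogonal_singleton_iff_inner_right]
      simp [inner_sub_right, inner_smul_right, he]
    have h1 := b.sum_repr' ⟨_, hm⟩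
    have h2 : x - ⟪e, x⟫_ℝ • e = ∑ i, φ x i • (b i : EuclideanSpace ℝ (Fin (n+1))) := by
      have h3 : _ = x - ⟪e, x⟫_ℝ • e := congrArg (Subtype.val) h1
      refine h3.symm.trans ?_
      push_cast
      refine Finset.sum_congr rfl fun i _ => ?_
      congr 1
      simp only [Submodule.coe_inner, inner_sub_right, inner_smul_right, hbe, mul_zero, sub_zero, φ]
    rw [h2]
    calc _ ≤ ∑ i, ‖φ x i • (b i : EuclideanSpace ℝ (Fin (n+1)))‖ := norm_sum_le _ _
      _ ≤ ∑ i : Fin n, ‖φ x‖ := Finset.sum_le_sum fun i _ => by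
        rw [norm_smul, hbn, mul_one]; exact norm_le_pi_norm _ i
      _ = n * ‖φ x‖ := by simp
      _ ≤ _ := by nlinarith [norm_nonneg (φ x)]
  have hφsub : ∀ x y, φ (y - x) = φ y - φ x := by
    intro x y; ext i; simp [φ, inner_sub_right]
  let g : ↥(S ∩ closedBall z r) → Fin n → ℝ := fun x => φ x
  have hanti : AntilipschitzWith (((n+1 : ℕ) : ℝ≥0) * K) g := by
    refine AntilipschitzWith.of_le_mul_dist fun x y => ?_
    rw [dist_comm, dist_comm (g x), Subtype.dist_eq, dist_eq_norm, dist_eq_norm]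
    have h1 := hS x x.2.1 y y.2.1
    have h2 := key (y - x)
    rw [hφsub] at h2
    calc _ ≤ _ := h1
      _ ≤ K * ((n+1) * ‖φ y - φ x‖) := by gcongr
      _ = _ := by push_cast; ring
  have h3 := hanti.le_hausdorffMeasure_image (d := n) (by positivity) univ
  have h4 : (μH[(n:ℝ)] : Measure (Fin n → ℝ)) = volume := by
    have := hausdorffMeasure_pi_real (ι := Fin n)
    simpa using this
  have h5 : μH[(n:ℝ)] (S ∩ closedBall z r) = μH[(n:ℝ)] (univ : Set ↥(S ∩ closedBall z r)) := by
    have hi : Isometry (Subtype.val : ↥(S ∩ closedBall z r) → _) := isometry_subtype_coe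
    rw [← hi.hausdorffMeasure_image (Or.inl (by positivity)), image_univ, Subtype.range_coe]
  have h6 : g '' univ ⊆ closedBall (φ z) r := by
    rintro _ ⟨x, -, rfl⟩
    rw [mem_closedBall, dist_eq_norm]
    have : ‖φ x - φ z‖ ≤ ‖(x : EuclideanSpace ℝ (Fin (n+1))) - z‖ := by
      rw [← hφsub]
      refine (pi_norm_le_iff_of_nonneg (norm_nonneg _)).2 fun i => ?_
      calc _ ≤ _ := norm_inner_le_norm _ _
        _ = _ := by rw [hbn, one_mul]
    refine this.trans ?_
    have := x.2.2
    rwa [mem_closedBall, dist_eq_norm] at this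
  rw [h5]
  refine h3.trans ?_
  rw [h4, ENNReal.rpow_natCast]
  calc _ ≤ ((((n + 1 : ℕ) : ℝ≥0) * K : ℝ≥0) : ℝ≥0∞) ^ n * volume (closedBall (φ z) (r:ℝ)) := by gcongr
    _ = _ := by
      rw [Real.volume_pi_closedBall _ r.coe_nonneg]
      rw [ENNReal.ofReal_pow (by positivity), ENNReal.ofReal_mul (by positivity)]
      simp [mul_pow, mul_assoc]

theorem frontier_bound {n : ℕ} (Ω : Set (EuclideanSpace ℝ (Fin (n+1)))) (ho : IsOpen Ω)
    (hb : Bornology.IsBounded Ω)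
    (hl : ∀ x ∈ frontier Ω, ∃ (e : EuclideanSpace ℝ (Fin (n+1))) (r lam : ℝ),
    ‖e‖ = 1 ∧ 0 < r ∧ 0 < lam ∧
    ∀ y ∈ Metric.ball x r ∩ closure Ω, ∀ t ∈ Ioo (0 : ℝ) r,
      Metric.ball (y + t • e) (lam * t) ⊆ Ω) :
    ∃ A : ℝ≥0, ∀ z (r : ℝ≥0), μH[(n:ℝ)] (frontier Ω ∩ closedBall z r) ≤ A * (r:ℝ≥0∞)^n := by
  have hloc : ∀ x ∈ frontier Ω, ∃ U ∈ nhdsWithin x (frontier Ω), ∃ A : ℝ≥0,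
      ∀ z (r : ℝ≥0), μH[(n:ℝ)] (U ∩ closedBall z r) ≤ A * (r:ℝ≥0∞)^n := by
    intro x hx
    obtain ⟨e, r, lam, he, hr, hlam, H⟩ := hl x hx
    refine ⟨frontier Ω ∩ ball x (r/2), inter_mem_nhdsWithin _ (ball_mem_nhds _ (by positivity)),
      _, graph_bound e he _ (Real.toNNReal (1 + lam⁻¹)) ?_⟩
    have main : ∀ a ∈ frontier Ω ∩ ball x (r/2), ∀ b ∈ frontier Ω ∩ ball x (r/2),
        0 < ⟪e, b - a⟫_ℝ → lam * ⟪e, b - a⟫_ℝ ≤ ‖(b - a) - ⟪e, b - a⟫_ℝ • e‖ := by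
      intro a ha b hb hs
      by_contra hcon
      push Not at hcon
      have hlt : ⟪e, b - a⟫_ℝ < r := by
        have h1 : ⟪e, b - a⟫_ℝ ≤ ‖b - a‖ := by
          simpa [he] using real_inner_le_norm e (b - a)
        have h2 : dist b a < r := by
          have := dist_triangle_right b a x
          have h3 := mem_ball.1 ha.2
          have h4 := mem_ball.1 hb.2
          linarith
        rw [dist_eq_norm] at h2; linarith
      have := H a ⟨ball_subset_ball (by linarith) ha.2, frontier_subset_closure ha.1⟩ _ ⟨hs, hlt⟩
      have hbΩ : b ∈ Ω := this (by
        rw [mem_ball, dist_eq_norm]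
        rwa [← sub_sub])
      have := hb.1
      rw [ho.frontier_eq] at this
      exact this.2 hbΩ
    have main2 : ∀ a ∈ frontier Ω ∩ ball x (r/2), ∀ b ∈ frontier Ω ∩ ball x (r/2),
        lam * |⟪e, b - a⟫_ℝ| ≤ ‖(b - a) - ⟪e, b - a⟫_ℝ • e‖ := by
      intro a ha b hb
      rcases lt_trichotomy ⟪e, b - a⟫_ℝ 0 with h | h | h
      · have h0 : ⟪e, a - b⟫_ℝ = - ⟪e, b - a⟫_ℝ := by rw [← inner_neg_right]; simp
        have := main b hb a ha (by rw [h0]; linarith)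
        rw [abs_of_neg h, ← h0]
        refine this.trans (le_of_eq ?_)
        rw [h0, ← norm_neg]
        congr 1
        module
      · rw [h]; simp
      · rw [abs_of_pos h]; exact main a ha b hb h
    intro a ha b hb
    have h1 := main2 a ha b hb
    have h2 : ‖b - a‖ ≤ ‖(b - a) - ⟪e, b - a⟫_ℝ • e‖ + |⟪e, b - a⟫_ℝ| := by
      calc ‖b - a‖ = ‖((b - a) - ⟪e, b - a⟫_ℝ • e) + ⟪e, b - a⟫_ℝ • e‖ := by congr 1; abel
        _ ≤ _ := norm_add_le _ _
        _ = _ := by rw [norm_smul, he]; simp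
    have h3 : |⟪e, b - a⟫_ℝ| ≤ lam⁻¹ * ‖(b - a) - ⟪e, b - a⟫_ℝ • e‖ := by
      rw [inv_mul_eq_div, le_div_iff₀ hlam]; linarith
    rw [Real.coe_toNNReal _ (by positivity)]
    linarith
  have hcomp : IsCompact (frontier Ω) :=
    isCompact_of_isClosed_isBounded isClosed_frontier (hb.closure.subset frontier_subset_closure)
  refine hcomp.induction_on (p := fun U => ∃ A : ℝ≥0,
      ∀ z (r : ℝ≥0), μH[(n:ℝ)] (U ∩ closedBall z r) ≤ A * (r:ℝ≥0∞)^n) ⟨0, by simp⟩ ?_ ?_ hloc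
  · rintro s t hst ⟨A, hA⟩
    exact ⟨A, fun z r => (measure_mono (inter_subset_inter_left _ hst)).trans (hA z r)⟩
  · rintro s t ⟨A, hA⟩ ⟨B, hB⟩
    refine ⟨A + B, fun z r => ?_⟩
    rw [union_inter_distrib_right]
    refine (measure_union_le _ _).trans ((add_le_add (hA z r) (hB z r)).trans ?_)
    push_cast; rw [add_mul]


theorem lint_aux : ∫⁻ t in Ioc (0:ℝ) 1, ENNReal.ofReal (t ^ (-(1/2) : ℝ)) = 2 := by
  have hi : IntervalIntegrable (fun t : ℝ => t ^ (-(1/2) : ℝ)) volume 0 1 :=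
    intervalIntegral.intervalIntegrable_rpow' (by norm_num)
  rw [← ofReal_integral_eq_lintegral_ofReal, ← intervalIntegral.integral_of_le zero_le_one,
    integral_rpow (Or.inl (by norm_num))]
  · norm_num
  · exact (intervalIntegrable_iff_integrableOn_Ioc_of_le zero_le_one).1 hi
  · filter_upwards [self_mem_ae_restrict measurableSet_Ioc] with t ht
    exact Real.rpow_nonneg ht.1.le _

/-- Weighted Cauchy-Schwarz on the unit interval. -/
theorem cs_aux (f : ℝ → ℝ≥0∞) (hf : AEMeasurable f (volume.restrict (Ioc (0:ℝ) 1))) :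
    (∫⁻ t in Ioc (0:ℝ) 1, f t) ^ 2 ≤
      2 * ∫⁻ t in Ioc (0:ℝ) 1, ENNReal.ofReal (t ^ (1/2 : ℝ)) * f t ^ 2 := by
  have h := ENNReal.lintegral_mul_le_Lp_mul_Lq (volume.restrict (Ioc (0:ℝ) 1))
    (p := 2) (q := 2) (by constructor <;> norm_num)
    (f := fun t => ENNReal.ofReal (t ^ (-(1/4) : ℝ)))
    (g := fun t => ENNReal.ofReal (t ^ (1/4 : ℝ)) * f t)
    (by fun_prop) (by fun_prop)
  have e0 : ∫⁻ t in Ioc (0:ℝ) 1, f t = ∫⁻ t in Ioc (0:ℝ) 1,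
      ((fun t => ENNReal.ofReal (t ^ (-(1/4) : ℝ))) * (fun t => ENNReal.ofReal (t ^ (1/4 : ℝ)) * f t)) t := by
    refine setLIntegral_congr_fun measurableSet_Ioc fun t ht => ?_
    simp only [Pi.mul_apply]
    rw [← mul_assoc, ← ENNReal.ofReal_mul (Real.rpow_nonneg ht.1.le _), ← Real.rpow_add ht.1]
    norm_num
  have e1 : ∫⁻ t in Ioc (0:ℝ) 1, (ENNReal.ofReal (t ^ (-(1/4) : ℝ))) ^ (2:ℝ) = 2 := by
    rw [← lint_aux]
    refine setLIntegral_congr_fun measurableSet_Ioc fun t ht => ?_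
    rw [ENNReal.ofReal_rpow_of_nonneg (Real.rpow_nonneg ht.1.le _) (by norm_num), ← Real.rpow_mul ht.1.le]
    norm_num
  have e2 : ∫⁻ t in Ioc (0:ℝ) 1, (ENNReal.ofReal (t ^ (1/4 : ℝ)) * f t) ^ (2:ℝ)
      = ∫⁻ t in Ioc (0:ℝ) 1, ENNReal.ofReal (t ^ (1/2 : ℝ)) * f t ^ 2 := by
    refine setLIntegral_congr_fun measurableSet_Ioc fun t ht => ?_
    rw [ENNReal.mul_rpow_of_nonneg _ _ (by norm_num),
      ENNReal.ofReal_rpow_of_nonneg (Real.rpow_nonneg ht.1.le _) (by norm_num), ← Real.rpow_mul ht.1.le]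
    norm_num
  rw [e0]
  calc _ ≤ _ := pow_le_pow_left₀ (by positivity) h 2
    _ = _ := by
      rw [e1, e2, mul_pow, ← ENNReal.rpow_natCast, ← ENNReal.rpow_natCast, ← ENNReal.rpow_mul, ← ENNReal.rpow_mul]
      norm_num

/-- Mean value estimate along a segment. -/
theorem seg_aux {d : ℕ} {Q : Set (EuclideanSpace ℝ (Fin d))} (hQo : IsOpen Q) (hQc : Convex ℝ Q)
    {w : EuclideanSpace ℝ (Fin d) → ℝ} (hwc : ContinuousOn w (closure Q)) (hw : ContDiffOn ℝ 1 w Q)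
    {x y : EuclideanSpace ℝ (Fin d)} (hx : x ∈ closure Q) (hy : y ∈ Q) :
    ‖w y - w x‖ₑ ≤ ∫⁻ t in Ioc (0:ℝ) 1,
      Q.indicator (fun z => ‖fderiv ℝ w z‖ₑ) (x + t • (y - x)) * ‖y - x‖ₑ := by
  have hmem : ∀ t ∈ Ioc (0:ℝ) 1, x + t • (y - x) ∈ Q := by
    intro t ht
    have := hQc.combo_closure_interior_mem_interior hx (by rwa [hQo.interior_eq])
      (a := 1 - t) (b := t) (by linarith [ht.2]) ht.1 (by ring)
    rw [hQo.interior_eq] at this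
    convert this using 1
    module
  have hcl : ∀ t ∈ Icc (0:ℝ) 1, x + t • (y - x) ∈ closure Q := by
    intro t ht
    rcases ht.1.eq_or_lt with h | h
    · subst h; simpa using hx
    · exact subset_closure (hmem t ⟨h, ht.2⟩)
  set γ : ℝ → EuclideanSpace ℝ (Fin d) := fun t => x + t • (y - x) with hγ
  have hγd : ∀ t, HasDerivAt γ (y - x) t := by
    intro t
    have h := ((hasDerivAt_id t).smul_const (y - x)).const_add x
    rw [one_smul] at h
    exact h
  have hγc : ContDiff ℝ 1 γ := by fun_prop
  have hε : ∀ ε ∈ Ioc (0:ℝ) 1, ‖w y - w (γ ε)‖ₑ ≤ ∫⁻ t in Ioc (0:ℝ) 1,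
      Q.indicator (fun z => ‖fderiv ℝ w z‖ₑ) (x + t • (y - x)) * ‖y - x‖ₑ := by
    intro ε hε
    have h1 : ContDiffOn ℝ 1 (w ∘ γ) (Icc ε 1) :=
      hw.comp hγc.contDiffOn fun t ht => hmem t ⟨hε.1.trans_le ht.1, ht.2⟩
    have h2 := enorm_sub_le_lintegral_deriv_of_contDiffOn_Icc h1 hε.2
    have h3 : γ 1 = y := by simp [hγ]
    rw [Function.comp, Function.comp, h3] at h2
    refine h2.trans ?_
    have hsub : Icc ε 1 ⊆ Ioc (0:ℝ) 1 := fun t ht => ⟨hε.1.trans_le ht.1, ht.2⟩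
    refine (lintegral_mono_set hsub).trans ?_
    refine setLIntegral_mono' measurableSet_Ioc fun t ht => ?_
    have hd : DifferentiableAt ℝ w (γ t) :=
      ((hw.differentiableOn one_ne_zero) _ (hmem t ht)).differentiableAt (hQo.mem_nhds (hmem t ht))
    have := (hd.hasFDerivAt.comp_hasDerivAt t (hγd t)).deriv
    rw [this, indicator_of_mem (hmem t ht)]
    exact ContinuousLinearMap.le_opENorm _ _
  have hc : ContinuousOn (fun t => ‖w y - w (γ t)‖ₑ) (Icc 0 1) :=
    (continuousOn_const.sub (hwc.comp hγc.continuous.continuousOn hcl)).enorm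
  have hγ0 : γ 0 = x := by simp [hγ]
  have ht := (hc 0 (by simp)).mono Ioc_subset_Icc_self
  have hne : (nhdsWithin (0:ℝ) (Ioc 0 1)).NeBot := by
    rw [nhdsWithin_Ioc_eq_nhdsGT zero_lt_one]; infer_instance
  have := le_of_tendsto ht (eventually_nhdsWithin_of_forall hε)
  simpa [hγ0] using this

theorem core {n : ℕ} {Q : Set (EuclideanSpace ℝ (Fin (n+1)))} (hQo : IsOpen Q) (hQc : Convex ℝ Q)
    (hne : Q.Nonempty)
    (ν : Measure (EuclideanSpace ℝ (Fin (n+1)))) (A h : ℝ≥0)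
    (hdiam : ∀ x ∈ closure Q, ∀ y ∈ Q, dist y x ≤ h)
    (hν : ∀ z, ∀ r : ℝ≥0, ν (closedBall z r) ≤ A * (r:ℝ≥0∞) ^ n)
    (hνQ : ∀ᵐ x ∂ν, x ∈ closure Q)
    {w : EuclideanSpace ℝ (Fin (n+1)) → ℝ} (hwc : ContinuousOn w (closure Q)) (hw : ContDiffOn ℝ 1 w Q) :
    volume Q * ∫⁻ x, ‖w x‖ₑ ^ 2 ∂ν ≤ (2 * A * (h:ℝ≥0∞)^n) * (∫⁻ y in Q, ‖w y‖ₑ ^ 2)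
      + (8 * A * (h:ℝ≥0∞)^(n+2)) * ∫⁻ y in Q, ‖fderiv ℝ w y‖ₑ ^ 2 := by
  obtain ⟨y₀, hy₀⟩ := hne
  have hν1 : ν univ ≤ A * (h:ℝ≥0∞)^n := by
    refine le_trans ?_ (hν y₀ h)
    refine measure_mono_ae ?_
    filter_upwards [hνQ] with x hx _
    have := hdiam x hx y₀ hy₀
    rw [dist_comm] at this
    exact this
  have : IsFiniteMeasure ν := ⟨hν1.trans_lt (by finiteness)⟩
  set g : EuclideanSpace ℝ (Fin (n+1)) → ℝ≥0∞ := Q.indicator (fun z => ‖fderiv ℝ w z‖ₑ) with hg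
  have hgm : Measurable g := (measurable_fderiv ℝ w).enorm.indicator hQo.measurableSet
  have hpt : ∀ x ∈ closure Q, ∀ y ∈ Q, ‖w x‖ₑ ^ 2 ≤ 2 * ‖w y‖ₑ ^ 2 +
      4 * (h:ℝ≥0∞)^2 * ∫⁻ t in Ioc (0:ℝ) 1, ENNReal.ofReal (t ^ (1/2 : ℝ)) * 
        ((closedBall x (t * h)).indicator (fun z => g z ^ 2) (x + t • (y - x))) := by
    intro x hx y hy
    have h1 := seg_aux hQo hQc hwc hw hx hy
    have hgx : Measurable fun t : ℝ => g (x + t • (y - x)) := by fun_prop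
    rw [lintegral_mul_const'' _ hgx.aemeasurable] at h1
    have h2 := cs_aux (fun t => g (x + t • (y - x))) (by fun_prop)
    have h3 : ‖y - x‖ₑ ≤ h := by
      rw [← edist_eq_enorm_sub, edist_le_coe, ← NNReal.coe_le_coe]
      exact hdiam x hx y hy
    have h4 : ‖w x‖ₑ ≤ ‖w y‖ₑ + ‖w y - w x‖ₑ := by
      calc ‖w x‖ₑ = ‖w y - (w y - w x)‖ₑ := by congr 1; ring
        _ ≤ _ := enorm_sub_le
    have h5 : ∫⁻ t in Ioc (0:ℝ) 1, ENNReal.ofReal (t ^ (1/2 : ℝ)) * (g (x + t • (y - x))) ^ 2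
        = ∫⁻ t in Ioc (0:ℝ) 1, ENNReal.ofReal (t ^ (1/2 : ℝ)) * 
        ((closedBall x (t * h)).indicator (fun z => g z ^ 2) (x + t • (y - x))) := by
      refine setLIntegral_congr_fun measurableSet_Ioc fun t ht => ?_
      beta_reduce
      rw [indicator_of_mem]
      rw [mem_closedBall, dist_eq_norm, add_sub_cancel_left, norm_smul, Real.norm_of_nonneg ht.1.le]
      have := hdiam x hx y hy
      rw [dist_eq_norm] at this
      exact mul_le_mul_of_nonneg_left this ht.1.le
    rw [← h5]
    have h6 : ∀ a b : ℝ≥0∞, (a + b)^2 ≤ 2 * a^2 + 2 * b^2 := by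
      intro a b
      have := ENNReal.rpow_add_le_mul_rpow_add_rpow a b (p := 2) (by norm_num)
      norm_num at this
      rwa [mul_add] at this
    calc _ ≤ (‖w y‖ₑ + ‖w y - w x‖ₑ) ^ 2 := by gcongr
      _ ≤ 2 * ‖w y‖ₑ ^ 2 + 2 * ‖w y - w x‖ₑ ^ 2 := h6 _ _
      _ ≤ 2 * ‖w y‖ₑ ^ 2 + 2 * ((∫⁻ t in Ioc (0:ℝ) 1, g (x + t • (y - x))) * h) ^ 2 := by
        gcongr
        exact h1.trans (by gcongr)
      _ = 2 * ‖w y‖ₑ ^ 2 + 2 * h ^ 2 * (∫⁻ t in Ioc (0:ℝ) 1, g (x + t • (y - x))) ^ 2 := by ring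
      _ ≤ 2 * ‖w y‖ₑ ^ 2 + 2 * h ^ 2 * (2 * _) := by gcongr
      _ = _ := by ring
  -- change of variables
  have hcv : ∀ x, ∀ t ∈ Ioc (0:ℝ) 1, ∀ f : EuclideanSpace ℝ (Fin (n+1)) → ℝ≥0∞, Measurable f → 
      ∫⁻ y, f (x + t • (y - x)) = ENNReal.ofReal (t ^ (n+1))⁻¹ * ∫⁻ z, f z := by
    intro x t ht f hf
    rw [lintegral_sub_right_eq_self (fun y => f (x + t • y)) x]
    have hm := Measure.map_addHaar_smul (volume : Measure (EuclideanSpace ℝ (Fin (n+1)))) ht.1.ne'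
    have h1 : ∫⁻ y, f (x + t • y) = ∫⁻ y, f (x + y) ∂(Measure.map (t • ·) volume) := by
      rw [lintegral_map (by fun_prop) (by fun_prop)]
    rw [h1, hm, lintegral_smul_measure, lintegral_add_left_eq_self f x]
    simp [abs_of_pos ht.1]
  have hcv2 : ∀ t ∈ Ioc (0:ℝ) 1,
      ∫⁻ x, (∫⁻ y, (closedBall x (t * h)).indicator (fun z => g z ^ 2) (x + t • (y - x))) ∂ν
       ≤ ENNReal.ofReal t⁻¹ * (A * (h:ℝ≥0∞)^n * ∫⁻ z, g z ^ 2) := by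
    intro t ht
    have hS : MeasurableSet {p : EuclideanSpace ℝ (Fin (n+1)) × EuclideanSpace ℝ (Fin (n+1)) |
        dist p.2 p.1 ≤ t * h} := measurableSet_le (by fun_prop) (by fun_prop)
    have hΨ : Measurable ({p : EuclideanSpace ℝ (Fin (n+1)) × EuclideanSpace ℝ (Fin (n+1)) |
        dist p.2 p.1 ≤ t * h}.indicator (fun p => g p.2 ^ 2)) :=
      Measurable.indicator (by fun_prop) hS
    calc _ = ∫⁻ x, ENNReal.ofReal (t ^ (n+1))⁻¹ *
          (∫⁻ z, (closedBall x (t * h)).indicator (fun z => g z ^ 2) z) ∂ν := by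
          refine lintegral_congr fun x => hcv x t ht _ ?_
          exact Measurable.indicator (by fun_prop) measurableSet_closedBall
      _ = ENNReal.ofReal (t ^ (n+1))⁻¹ *
          ∫⁻ x, (∫⁻ z, (closedBall x (t * h)).indicator (fun z => g z ^ 2) z) ∂ν :=
          lintegral_const_mul' _ _ ENNReal.ofReal_ne_top
      _ = ENNReal.ofReal (t ^ (n+1))⁻¹ *
          ∫⁻ z, (∫⁻ x, (closedBall x (t * h)).indicator (fun z => g z ^ 2) z ∂ν) := by
          congr 1
          exact lintegral_lintegral_swap (f := fun x z =>
            (closedBall x (t * h)).indicator (fun z => g z ^ 2) z) hΨ.aemeasurable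
      _ = ENNReal.ofReal (t ^ (n+1))⁻¹ * ∫⁻ z, g z ^ 2 * ν (closedBall z (t * h)) := by
          congr 1
          refine lintegral_congr fun z => ?_
          rw [← lintegral_indicator_const measurableSet_closedBall]
          refine lintegral_congr fun x => ?_
          simp only [indicator, mem_closedBall, dist_comm]
      _ ≤ ENNReal.ofReal (t ^ (n+1))⁻¹ * ∫⁻ z, g z ^ 2 * (A * ENNReal.ofReal (t * h) ^ n) := by
          gcongr with z
          have := hν z (Real.toNNReal (t * h))
          rwa [Real.coe_toNNReal _ (mul_nonneg ht.1.le h.coe_nonneg)] at this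
      _ = _ := by
          rw [lintegral_mul_const _ (by fun_prop), ENNReal.ofReal_mul ht.1.le, mul_pow]
          have : ENNReal.ofReal (t ^ (n+1))⁻¹ * ENNReal.ofReal t ^ n = ENNReal.ofReal t⁻¹ := by
            rw [← ENNReal.ofReal_pow ht.1.le, ← ENNReal.ofReal_mul (by have := ht.1; positivity)]
            congr 1
            have := ht.1.ne'
            field_simp
            ring
          rw [← this]
          simp only [ENNReal.ofReal_coe_nnreal]
          ring
  let Φ : EuclideanSpace ℝ (Fin (n+1)) × ℝ × EuclideanSpace ℝ (Fin (n+1)) → ℝ≥0∞ := fun p =>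
    ENNReal.ofReal (p.2.1 ^ (1/2 : ℝ)) *
      ((closedBall p.1 (p.2.1 * h)).indicator (fun z => g z ^ 2) (p.1 + p.2.1 • (p.2.2 - p.1)))
  have hΦ : Measurable Φ := by
    refine Measurable.mul (by fun_prop) ?_
    have hS : MeasurableSet {p : EuclideanSpace ℝ (Fin (n+1)) × ℝ × EuclideanSpace ℝ (Fin (n+1)) |
        dist (p.1 + p.2.1 • (p.2.2 - p.1)) p.1 ≤ p.2.1 * h} :=
      measurableSet_le (by fun_prop) (by fun_prop)
    exact Measurable.indicator (f := fun p : EuclideanSpace ℝ (Fin (n+1)) × ℝ ×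
      EuclideanSpace ℝ (Fin (n+1)) => g (p.1 + p.2.1 • (p.2.2 - p.1)) ^ 2) (by fun_prop) hS
  have hswap : ∫⁻ x, (∫⁻ y, ∫⁻ t in Ioc (0:ℝ) 1, Φ (x, t, y)) ∂ν
      ≤ 2 * (A * (h:ℝ≥0∞)^n * ∫⁻ z, g z ^ 2) := by
    calc _ = ∫⁻ x, (∫⁻ t in Ioc (0:ℝ) 1, ∫⁻ y, Φ (x, t, y)) ∂ν := by
          refine lintegral_congr fun x => ?_
          refine lintegral_lintegral_swap (f := fun y t => Φ (x, t, y)) (Measurable.aemeasurable ?_)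
          exact hΦ.comp (by fun_prop :
            Measurable fun q : EuclideanSpace ℝ (Fin (n+1)) × ℝ => (x, q.2, q.1))
      _ = ∫⁻ t in Ioc (0:ℝ) 1, ∫⁻ x, (∫⁻ y, Φ (x, t, y)) ∂ν := by
          refine lintegral_lintegral_swap (f := fun x t => ∫⁻ y, Φ (x, t, y))
            (Measurable.aemeasurable ?_)
          exact Measurable.lintegral_prod_right' (f := fun q :
            (EuclideanSpace ℝ (Fin (n+1)) × ℝ) × EuclideanSpace ℝ (Fin (n+1)) =>
              Φ (q.1.1, q.1.2, q.2)) (hΦ.comp (by fun_prop))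
      _ ≤ ∫⁻ t in Ioc (0:ℝ) 1, ENNReal.ofReal (t ^ (-(1/2) : ℝ)) *
            (A * (h:ℝ≥0∞)^n * ∫⁻ z, g z ^ 2) := by
          refine setLIntegral_mono' measurableSet_Ioc fun t ht => ?_
          simp only [Φ]
          simp_rw [lintegral_const_mul' _ _ ENNReal.ofReal_ne_top]
          refine (mul_le_mul_right (hcv2 t ht) _).trans (le_of_eq ?_)
          rw [← mul_assoc, ← ENNReal.ofReal_mul (Real.rpow_nonneg ht.1.le _)]
          congr 2
          rw [← Real.rpow_neg_one, ← Real.rpow_add ht.1]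
          norm_num
      _ = _ := by
          rw [lintegral_mul_const _ (by fun_prop), lint_aux]
  have hg2 : ∫⁻ z, g z ^ 2 = ∫⁻ y in Q, ‖fderiv ℝ w y‖ₑ ^ 2 := by
    rw [← lintegral_indicator hQo.measurableSet]
    refine lintegral_congr fun z => ?_
    simp only [hg, indicator]
    split_ifs <;> simp
  rw [← hg2]
  have hwm : AEMeasurable (fun y => 2 * ‖w y‖ₑ ^ 2) (volume.restrict Q) :=
    (((hw.continuousOn.aestronglyMeasurable hQo.measurableSet).enorm).pow_const 2).const_mul 2
  have hstep : ∀ x ∈ closure Q, ‖w x‖ₑ ^ 2 * volume Q ≤ 2 * (∫⁻ y in Q, ‖w y‖ₑ ^ 2) +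
      4 * (h:ℝ≥0∞)^2 * ∫⁻ y, ∫⁻ t in Ioc (0:ℝ) 1, Φ (x, t, y) := by
    intro x hx
    calc _ = ∫⁻ y in Q, ‖w x‖ₑ ^ 2 := by rw [setLIntegral_const]
      _ ≤ ∫⁻ y in Q, (2 * ‖w y‖ₑ ^ 2 +
          4 * (h:ℝ≥0∞)^2 * ∫⁻ t in Ioc (0:ℝ) 1, Φ (x, t, y)) :=
          setLIntegral_mono' hQo.measurableSet fun y hy => hpt x hx y hy
      _ = 2 * (∫⁻ y in Q, ‖w y‖ₑ ^ 2) +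
          4 * (h:ℝ≥0∞)^2 * ∫⁻ y in Q, ∫⁻ t in Ioc (0:ℝ) 1, Φ (x, t, y) := by
          rw [lintegral_add_left' hwm, lintegral_const_mul' _ _ (by finiteness),
            lintegral_const_mul' _ _ (by finiteness)]
      _ ≤ _ := by
          gcongr
          exact Measure.restrict_le_self
  calc _ = ∫⁻ x, ‖w x‖ₑ ^ 2 * volume Q ∂ν := ?_
    _ ≤ ∫⁻ x, (2 * (∫⁻ y in Q, ‖w y‖ₑ ^ 2) +
      4 * (h:ℝ≥0∞)^2 * ∫⁻ y, ∫⁻ t in Ioc (0:ℝ) 1, Φ (x, t, y)) ∂ν := by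
        refine lintegral_mono_ae ?_
        filter_upwards [hνQ] with x hx using hstep x hx
    _ = 2 * (∫⁻ y in Q, ‖w y‖ₑ ^ 2) * ν univ + 4 * (h:ℝ≥0∞)^2 *
      ∫⁻ x, (∫⁻ y, ∫⁻ t in Ioc (0:ℝ) 1, Φ (x, t, y)) ∂ν := by
        rw [lintegral_add_left measurable_const, lintegral_const,
          lintegral_const_mul' _ _ (by finiteness)]
    _ ≤ 2 * (∫⁻ y in Q, ‖w y‖ₑ ^ 2) * (A * (h:ℝ≥0∞)^n) + 4 * (h:ℝ≥0∞)^2 *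
      (2 * (A * (h:ℝ≥0∞)^n * ∫⁻ z, g z ^ 2)) := by gcongr
    _ = _ := by ring
  rw [mul_comm, lintegral_mul_const'']
  have hr : ν.restrict (closure Q) = ν := Measure.restrict_eq_self_of_ae_mem hνQ
  rw [← hr]
  exact ((hwc.aestronglyMeasurable isClosed_closure.measurableSet).enorm).pow_const 2

theorem grad_bdd {d : ℕ} {K : Set (EuclideanSpace ℝ (Fin d))} (hKo : IsOpen K)
    (hKc : IsCompact (closure K)) {v : EuclideanSpace ℝ (Fin d) → ℝ}
    (hv : ContDiffOn ℝ 1 v (closure K)) : ∃ B : ℝ, ∀ x ∈ K, ‖fderiv ℝ v x‖ ≤ B := by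
  have := hKc.induction_on (p := fun U => ∃ B : ℝ, ∀ x ∈ U, x ∈ K → ‖fderiv ℝ v x‖ ≤ B)
    ⟨0, by simp⟩ (fun s t hst ⟨B, hB⟩ => ⟨B, fun x hx hK => hB x (hst hx) hK⟩)
    (fun s t ⟨B, hB⟩ ⟨B', hB'⟩ => ⟨max B B', fun x hx hK => by
      rcases hx with hx | hx
      · exact (hB x hx hK).trans (le_max_left _ _)
      · exact (hB' x hx hK).trans (le_max_right _ _)⟩) ?_
  · obtain ⟨B, hB⟩ := this
    exact ⟨B, fun x hx => hB x (subset_closure hx) hx⟩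
  · intro x hx
    have h1 : ContDiffWithinAt ℝ (0 + 1) v (closure K) x := by simpa using hv x hx
    obtain ⟨u, hu, -, f', hf', hc⟩ :=
      (contDiffWithinAt_succ_iff_hasFDerivWithinAt (n := 0) (by simp)).1 h1
    rw [insert_eq_of_mem hx] at hu
    have hcont : ContinuousWithinAt f' u x := hc.continuousWithinAt
    have hcont2 : ContinuousWithinAt f' (closure K) x := hcont.mono_of_mem_nhdsWithin hu
    have hbd : ∀ᶠ y in nhdsWithin x (closure K), ‖f' y‖ < ‖f' x‖ + 1 :=
      hcont2.norm.eventually_lt_const (by linarith)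
    obtain ⟨V, hVo, hxV, hV⟩ := mem_nhdsWithin.1 (Filter.inter_mem hu hbd)
    refine ⟨V ∩ closure K, inter_comm V _ ▸ inter_mem_nhdsWithin _ (hVo.mem_nhds hxV), ‖f' x‖ + 1, ?_⟩
    rintro y ⟨hyV, hyc⟩ hyK
    have hyu := hV ⟨hyV, hyc⟩
    have hun : u ∈ nhds y := Filter.mem_of_superset ((hVo.inter hKo).mem_nhds ⟨hyV, hyK⟩)
      fun z hz => (hV ⟨hz.1, subset_closure hz.2⟩).1
    rw [((hf' y hyu.1).hasFDerivAt hun).fderiv]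
    exact hyu.2.le

/-- Change of variables inequality for a bi-Lipschitz map. -/
theorem cv_le {d : ℕ} {Q : Set (EuclideanSpace ℝ (Fin d))}
    {F Finv : EuclideanSpace ℝ (Fin d) → EuclideanSpace ℝ (Fin d)} {L : ℝ≥0}
    (hQ : MeasurableSet Q) (hF : ContinuousOn F Q) (hK : MeasurableSet (F '' Q))
    (hinv : ∀ x ∈ Q, Finv (F x) = x) (hlip : LipschitzOnWith L Finv (F '' Q))
    {f : EuclideanSpace ℝ (Fin d) → ℝ≥0∞} (hf : AEMeasurable f (volume.restrict (F '' Q))) :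
    ∫⁻ y in Q, f (F y) ≤ (L:ℝ≥0∞) ^ d * ∫⁻ x in F '' Q, f x := by
  have hFm : AEMeasurable F (volume.restrict Q) := hF.aemeasurable hQ
  have hle : Measure.map F (volume.restrict Q) ≤ ((L:ℝ≥0∞) ^ d) • volume.restrict (F '' Q) := by
    refine Measure.le_iff.2 fun A hA => ?_
    rw [Measure.map_apply_of_aemeasurable hFm hA, Measure.restrict_apply' hQ, Measure.smul_apply,
      Measure.restrict_apply hA, smul_eq_mul]
    refine le_trans (measure_mono ?_) (vol_lip (hlip.mono (inter_subset_right : A ∩ F '' Q ⊆ _)))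
    rintro y ⟨hyA, hyQ⟩
    exact ⟨F y, ⟨hyA, mem_image_of_mem F hyQ⟩, hinv y hyQ⟩
  have hfm : AEMeasurable f (Measure.map F (volume.restrict Q)) :=
    (hf.smul_measure _).mono_measure hle
  rw [← lintegral_map' hfm hFm, ← smul_eq_mul, ← lintegral_smul_measure]
  exact lintegral_mono' hle le_rfl

theorem box_vol {d : ℕ} (a b : Fin d → ℝ) (c : ℝ) (hc : 0 ≤ c) (h : ∀ i, c ≤ b i - a i) :
    ENNReal.ofReal (c ^ d) ≤ volume {x : EuclideanSpace ℝ (Fin d) | ∀ i, x i ∈ Ioo (a i) (b i)} := by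
  have e : {x : EuclideanSpace ℝ (Fin d) | ∀ i, x i ∈ Ioo (a i) (b i)}
      = (MeasurableEquiv.toLp 2 (Fin d → ℝ)).symm ⁻¹' (univ.pi fun i => Ioo (a i) (b i)) := by
    ext x; simp
  rw [e, (EuclideanSpace.volume_preserving_symm_measurableEquiv_toLp (Fin d)).measure_preimage_equiv,
    Real.volume_pi_Ioo, ENNReal.ofReal_pow hc]
  calc _ = ∏ i : Fin d, ENNReal.ofReal c := by simp
    _ ≤ _ := Finset.prod_le_prod' fun i _ => ENNReal.ofReal_le_ofReal (h i)

theorem box_open {d : ℕ} (a b : Fin d → ℝ) :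
    IsOpen {x : EuclideanSpace ℝ (Fin d) | ∀ i, x i ∈ Ioo (a i) (b i)} := by
  rw [ofPred_forall]
  exact isOpen_iInter_of_finite fun i => isOpen_Ioo.preimage (by fun_prop)

theorem box_convex {d : ℕ} (a b : Fin d → ℝ) :
    Convex ℝ {x : EuclideanSpace ℝ (Fin d) | ∀ i, x i ∈ Ioo (a i) (b i)} := by
  intro x hx y hy s t hs ht hst i
  simpa using (convex_Ioo (a i) (b i)) (hx i) (hy i) hs ht hst

theorem unitCube_bdd (d : ℕ) : Bornology.IsBounded (unitCube d) := by
  have h := ((isCompact_univ_pi (fun _ : Fin d => isCompact_Icc (a := (0:ℝ)) (b := 1))).image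
    (EuclideanSpace.equiv (Fin d) ℝ).symm.continuous).isBounded
  refine h.subset fun x hx => ⟨fun i => x i, ?_, ?_⟩
  · intro i _; exact Ioo_subset_Icc_self (hx i)
  · ext i; rfl

theorem elem_bound {n p : ℕ} {θ Cshape Cnb CΓ : ℝ} (G : Geom (n+1)) (L A : ℝ≥0) (hL : 1 ≤ L)
    (hFl : LipschitzOnWith L G.F (closure (unitCube (n+1))))
    (hFil : LipschitzOnWith L G.Finv (closure G.Ω₀))
    (hA : ∀ z (r : ℝ≥0), μH[(n:ℝ)] (frontier G.Ω ∩ closedBall z r) ≤ A * (r:ℝ≥0∞)^n)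
    (M : Mesh (n+1) p G θ Cshape Cnb CΓ) (Q : Set (Euc (n+1))) (hQ : Q ∈ M.pMesh)
    (v : Euc (n+1) → ℝ) (hv : ContDiffOn ℝ 1 v (closure (G.phys Q))) :
    (∫ x in G.ΓK Q, v x ^ 2 ∂(sMeas (n+1)))
        ≤ (8 * (A * (2 * L) ^ n) * L ^ (n+4) / Cshape ^ (n+1) + 1)
          * ((∫ x in G.phys Q, v x ^ 2 / M.hsz x)
            + ∫ x in G.phys Q, M.hsz x * ‖gradient v x‖ ^ 2) := by
  have hCs := M.shape_pos
  obtain ⟨a, b, hab, hQeq⟩ := M.mesh_boxes Q hQ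
  have hQo : IsOpen Q := hQeq ▸ box_open a b
  have hQc : Convex ℝ Q := hQeq ▸ box_convex a b
  have hQne : Q.Nonempty := (M.mesh_active Q hQ).mono inter_subset_left
  have hQsub := M.mesh_sub Q hQ
  have hQb : Bornology.IsBounded Q := (unitCube_bdd _).subset hQsub
  have hclsub : closure Q ⊆ closure (unitCube (n+1)) := closure_mono hQsub
  have hQcomp : IsCompact (closure Q) := hQb.isCompact_closure
  have hFc : ContinuousOn G.F (closure Q) := hFl.continuousOn.mono hclsub
  set K := G.phys Q with hKdef
  have hKΩ : K ⊆ G.Ω₀ := by rw [← G.F_image]; exact image_mono hQsub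
  have hKeq : K = G.Ω₀ ∩ G.Finv ⁻¹' Q := by
    ext x; constructor
    · rintro ⟨y, hy, rfl⟩
      refine ⟨hKΩ ⟨y, hy, rfl⟩, ?_⟩
      rw [mem_preimage, G.F_leftInv y (hclsub (subset_closure hy))]; exact hy
    · rintro ⟨hx, hxQ⟩
      exact ⟨G.Finv x, hxQ, G.F_rightInv x (subset_closure hx)⟩
  have hKo : IsOpen K := by
    rw [hKeq]
    exact (hFil.continuousOn.mono subset_closure).isOpen_inter_preimage G.Ω₀_open hQo
  have hKcl : G.F '' closure Q = closure K := image_closure_of_isCompact hQcomp hFc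
  have hKcomp : IsCompact (closure K) := hKcl ▸ hQcomp.image_of_continuousOn hFc
  have hKclΩ : closure K ⊆ closure G.Ω₀ := closure_mono hKΩ
  have hKb : Bornology.IsBounded K := hKcomp.isBounded.subset subset_closure
  have hFinvcl : ∀ x ∈ closure K, G.Finv x ∈ closure Q := by
    intro x hx
    rw [← hKcl] at hx
    obtain ⟨y, hy, rfl⟩ := hx
    rw [G.F_leftInv y (hclsub hy)]; exact hy
  have hleft : ∀ y ∈ Q, G.Finv (G.F y) = y := fun y hy => G.F_leftInv y (hclsub (subset_closure hy))
  -- diameters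
  have hdQ : 0 < diam Q := by
    obtain ⟨x, hx⟩ := hQne
    obtain ⟨ε, hε, hball⟩ := Metric.isOpen_iff.1 hQo x hx
    have : Nontrivial (Euc (n+1)) := by infer_instance
    obtain ⟨y, hy⟩ : ∃ y ∈ ball x ε, y ≠ x := by
      have hnt : (nhdsWithin x {x}ᶜ).NeBot := inferInstance
      obtain ⟨y, hy⟩ := hnt.nonempty_of_mem
        (Filter.inter_mem (mem_nhdsWithin_of_mem_nhds (ball_mem_nhds x hε)) self_mem_nhdsWithin)
      exact ⟨y, hy.1, hy.2⟩
    exact (dist_pos.2 hy.2).trans_le (dist_le_diam_of_mem hQb (hball hy.1) hx)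
  have hKQ : diam K ≤ L * diam Q :=
    diam_le_of_forall_dist_le (by positivity) (by
      rintro _ ⟨x, hx, rfl⟩ _ ⟨y, hy, rfl⟩
      refine (hFl.dist_le_mul x (hclsub (subset_closure hx)) y (hclsub (subset_closure hy))).trans ?_
      gcongr
      exact dist_le_diam_of_mem hQb hx hy)
  have hQK : diam Q ≤ L * diam K :=
    diam_le_of_forall_dist_le (by positivity) (by
      intro x hx y hy
      have h1 := hFil.dist_le_mul (G.F x) (hKclΩ (subset_closure ⟨x, hx, rfl⟩))
        (G.F y) (hKclΩ (subset_closure ⟨y, hy, rfl⟩))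
      rw [hleft x hx, hleft y hy] at h1
      refine h1.trans ?_
      gcongr
      exact dist_le_diam_of_mem hKb ⟨x, hx, rfl⟩ ⟨y, hy, rfl⟩)
  have hdK : 0 < diam K := by
    by_contra hcon
    have : (L:ℝ) * diam K ≤ 0 := mul_nonpos_of_nonneg_of_nonpos L.coe_nonneg (not_lt.1 hcon)
    linarith
  -- the measure
  have hsM : sMeas (n+1) = μH[(n:ℝ)] := by
    unfold sMeas; congr 1; push_cast; ring
  set ν : Measure (Euc (n+1)) := (sMeas (n+1)).restrict (frontier G.Ω ∩ closure K) with hνdef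
  have hTm : MeasurableSet (frontier G.Ω ∩ closure K) :=
    (isClosed_frontier.inter isClosed_closure).measurableSet
  have hFim : AEMeasurable G.Finv ν :=
    (hFil.continuousOn.mono (inter_subset_right.trans hKclΩ)).aemeasurable hTm
  have hνmem : ∀ᵐ x ∂ν, x ∈ frontier G.Ω ∩ closure K := ae_restrict_mem hTm
  have hball : ∀ z, ∀ r : ℝ≥0, Measure.map G.Finv ν (closedBall z r)
      ≤ ((A * (2 * L) ^ n : ℝ≥0) : ℝ≥0∞) * (r:ℝ≥0∞) ^ n := by
    intro z r
    rw [Measure.map_apply_of_aemeasurable hFim measurableSet_closedBall, hνdef,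
      Measure.restrict_apply' hTm, hsM]
    rcases (G.Finv ⁻¹' closedBall z r ∩ (frontier G.Ω ∩ closure K)).eq_empty_or_nonempty with h | ⟨x₀, hx₀⟩
    · rw [h]; simp
    · refine (measure_mono ?_).trans ((hA x₀ (2 * L * r)).trans (le_of_eq ?_))
      · rintro x ⟨hxB, hxf, hxK⟩
        refine ⟨hxf, ?_⟩
        rw [mem_closedBall]
        have h1 := hFl.dist_le_mul (G.Finv x) (hclsub (hFinvcl x hxK))
          (G.Finv x₀) (hclsub (hFinvcl x₀ hx₀.2.2))
        rw [G.F_rightInv x (hKclΩ hxK), G.F_rightInv x₀ (hKclΩ hx₀.2.2)] at h1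
        have h2 : dist (G.Finv x) (G.Finv x₀) ≤ r + r :=
          (dist_triangle_right _ _ z).trans (add_le_add hxB hx₀.1)
        refine h1.trans ?_
        push_cast
        calc (L:ℝ) * dist (G.Finv x) (G.Finv x₀) ≤ L * (r + r) := by gcongr
          _ = _ := by ring
      · push_cast; ring
  have hmapmem : ∀ᵐ y ∂(Measure.map G.Finv ν), y ∈ closure Q := by
    have hm : MeasurableSet {y : Euc (n+1) | y ∈ closure Q} := isClosed_closure.measurableSet
    refine (ae_map_iff hFim hm).2 ?_
    filter_upwards [hνmem] with x hx using hFinvcl x hx.2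
  -- the pulled back function
  have hmaps : MapsTo G.F (closure Q) (closure K) := fun y hy => hKcl ▸ mem_image_of_mem _ hy
  have hwc : ContinuousOn (v ∘ G.F) (closure Q) := hv.continuousOn.comp hFc hmaps
  have hw : ContDiffOn ℝ 1 (v ∘ G.F) Q :=
    (hv.comp ((M.F_smooth Q hQ).of_le (by exact_mod_cast le_top)) hmaps).mono subset_closure
  have hvd : ∀ x ∈ K, DifferentiableAt ℝ v x := fun x hx =>
    ((hv.differentiableOn one_ne_zero) x (subset_closure hx)).differentiableAt
      (Filter.mem_of_superset (hKo.mem_nhds hx) subset_closure)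
  have hFd : ∀ y ∈ Q, DifferentiableAt ℝ G.F y := fun y hy =>
    (((M.F_smooth Q hQ).differentiableOn (by simp)) y (subset_closure hy)).differentiableAt
      (Filter.mem_of_superset (hQo.mem_nhds hy) subset_closure)
  have hcore := core hQo hQc hQne (Measure.map G.Finv ν) (A * (2 * L) ^ n) (Real.toNNReal (diam Q))
    (by
      intro x hx y hy
      rw [Real.coe_toNNReal _ diam_nonneg, ← diam_closure]
      exact dist_le_diam_of_mem hQcomp.isBounded (subset_closure hy) hx) hball hmapmem hwc hw
  -- left-hand side
  have hLHS : ∫⁻ x in G.ΓK Q, ‖v x‖ₑ ^ 2 ∂(sMeas (n+1))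
      ≤ ∫⁻ y, ‖(v ∘ G.F) y‖ₑ ^ 2 ∂(Measure.map G.Finv ν) := by
    have hm : AEMeasurable (fun y => ‖(v ∘ G.F) y‖ₑ ^ 2) (Measure.map G.Finv ν) := by
      rw [← Measure.restrict_eq_self_of_ae_mem hmapmem]
      exact ((hwc.aestronglyMeasurable isClosed_closure.measurableSet).enorm).pow_const 2
    rw [lintegral_map' hm hFim]
    calc _ ≤ ∫⁻ x, ‖v x‖ₑ ^ 2 ∂ν :=
          lintegral_mono_set (inter_subset_inter_left _ G.ΓD_sub)
      _ = _ := by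
          refine lintegral_congr_ae ?_
          filter_upwards [hνmem] with x hx
          simp only [Function.comp]
          rw [G.F_rightInv x (hKclΩ hx.2)]
  have hvm : AEMeasurable (fun x => ‖v x‖ₑ ^ 2) (volume.restrict (G.F '' Q)) :=
    (((hv.continuousOn.mono subset_closure).aestronglyMeasurable hKo.measurableSet).enorm).pow_const 2
  have hgm : AEMeasurable (fun x => ‖fderiv ℝ v x‖ₑ ^ 2) (volume.restrict (G.F '' Q)) :=
    ((measurable_fderiv ℝ v).enorm.pow_const 2).aemeasurable
  have hlipK : LipschitzOnWith L G.Finv (G.F '' Q) := hFil.mono (hKΩ.trans subset_closure)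
  have hV := cv_le hQo.measurableSet (hFc.mono subset_closure) hKo.measurableSet hleft hlipK hvm
  have hG := cv_le hQo.measurableSet (hFc.mono subset_closure) hKo.measurableSet hleft hlipK hgm
  have hgrad : ∫⁻ y in Q, ‖fderiv ℝ (v ∘ G.F) y‖ₑ ^ 2
      ≤ (L:ℝ≥0∞) ^ 2 * ∫⁻ y in Q, ‖fderiv ℝ v (G.F y)‖ₑ ^ 2 := by
    rw [← lintegral_const_mul' _ _ (by finiteness)]
    refine setLIntegral_mono' hQo.measurableSet fun y hy => ?_
    rw [fderiv_comp y (hvd _ ⟨y, hy, rfl⟩) (hFd y hy), ← mul_pow]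
    have h1 : ‖fderiv ℝ G.F y‖ₑ ≤ L := by
      rw [← ofReal_norm_eq_enorm, ← ENNReal.ofReal_coe_nnreal]
      exact ENNReal.ofReal_le_ofReal (norm_fderiv_le_of_lipschitzOn ℝ (hQo.mem_nhds hy)
        (hFl.mono (subset_closure.trans hclsub)))
    gcongr
    calc _ ≤ ‖fderiv ℝ v (G.F y)‖ₑ * ‖fderiv ℝ G.F y‖ₑ := ContinuousLinearMap.opENorm_comp_le _ _
      _ ≤ ‖fderiv ℝ v (G.F y)‖ₑ * L := by gcongr
      _ = _ := mul_comm _ _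
  have hvol : ENNReal.ofReal ((Cshape * diam Q) ^ (n+1)) ≤ volume Q := by
    have := box_vol a b (Cshape * diam Q) (by positivity) (M.shape_reg Q hQ a b hQeq)
    rwa [← hQeq] at this
  set IV := ∫⁻ x in K, ‖v x‖ₑ ^ 2 with hIV
  set IG := ∫⁻ x in K, ‖fderiv ℝ v x‖ₑ ^ 2 with hIG
  set IΓ := ∫⁻ x in G.ΓK Q, ‖v x‖ₑ ^ 2 ∂(sMeas (n+1)) with hIΓ
  have hfin : ∀ f : Euc (n+1) → ℝ≥0∞, (∃ B : ℝ, ∀ x ∈ K, f x ≤ ENNReal.ofReal B) →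
      ∫⁻ x in K, f x ^ 2 ≠ ⊤ := by
    rintro f ⟨B, hB⟩
    refine ne_of_lt (lt_of_le_of_lt (setLIntegral_mono' (g := fun _ => ENNReal.ofReal B ^ 2)
      hKo.measurableSet fun x hx => pow_le_pow_left₀ (by positivity) (hB x hx) 2) ?_)
    rw [setLIntegral_const]
    exact ENNReal.mul_lt_top (by finiteness) hKb.measure_lt_top
  have hIVfin : IV ≠ ⊤ := by
    obtain ⟨B, hB⟩ := hKcomp.exists_bound_of_continuousOn hv.continuousOn
    refine hfin _ ⟨B, fun x hx => ?_⟩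
    rw [← ofReal_norm_eq_enorm]
    exact ENNReal.ofReal_le_ofReal (hB x (subset_closure hx))
  have hIGfin : IG ≠ ⊤ := by
    obtain ⟨B, hB⟩ := grad_bdd hKo hKcomp hv
    refine hfin _ ⟨B, fun x hx => ?_⟩
    rw [← ofReal_norm_eq_enorm]
    exact ENNReal.ofReal_le_ofReal (hB x hx)
  set h : ℝ := diam Q with hh
  set H : ℝ := diam K with hH
  have hV' : ∫⁻ y in Q, ‖v (G.F y)‖ₑ ^ 2 ≤ (L:ℝ≥0∞) ^ (n+1) * IV := hV
  have hG' : ∫⁻ y in Q, ‖fderiv ℝ v (G.F y)‖ₑ ^ 2 ≤ (L:ℝ≥0∞) ^ (n+1) * IG := hG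
  have hmain : ENNReal.ofReal ((Cshape * h) ^ (n+1)) * IΓ ≤
      ENNReal.ofReal (2 * (A * (2 * L) ^ n) * h ^ n * L ^ (n+1)) * IV +
      ENNReal.ofReal (8 * (A * (2 * L) ^ n) * h ^ (n+2) * L ^ (n+3)) * IG := by
    have e1 : ENNReal.ofReal (2 * (A * (2 * L) ^ n) * h ^ n * L ^ (n+1)) =
        2 * ((A * (2 * L) ^ n : ℝ≥0) : ℝ≥0∞) * ((Real.toNNReal h : ℝ≥0) : ℝ≥0∞) ^ n * (L:ℝ≥0∞) ^ (n+1) := by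
      rw [← ENNReal.coe_ofNat]
      norm_cast
      rw [ENNReal.ofReal]
      congr 1
      ext
      rw [Real.coe_toNNReal _ (by positivity)]
      push_cast
      rw [Real.coe_toNNReal _ hdQ.le]
    have e2 : ENNReal.ofReal (8 * (A * (2 * L) ^ n) * h ^ (n+2) * L ^ (n+3)) =
        8 * ((A * (2 * L) ^ n : ℝ≥0) : ℝ≥0∞) * ((Real.toNNReal h : ℝ≥0) : ℝ≥0∞) ^ (n+2) * (L:ℝ≥0∞) ^ (n+3) := by
      rw [← ENNReal.coe_ofNat]
      norm_cast
      rw [ENNReal.ofReal]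
      congr 1
      ext
      rw [Real.coe_toNNReal _ (by positivity)]
      push_cast
      rw [Real.coe_toNNReal _ hdQ.le]
    rw [e1, e2]
    calc _ ≤ volume Q * ∫⁻ y, ‖(v ∘ G.F) y‖ₑ ^ 2 ∂(Measure.map G.Finv ν) := mul_le_mul' hvol hLHS
      _ ≤ _ := hcore
      _ ≤ _ := add_le_add (mul_le_mul_right hV' _)
        (mul_le_mul_right (hgrad.trans (mul_le_mul_right hG' _)) _)
      _ = _ := by ring
  -- pass to real numbers
  have hposc : 0 < (Cshape * h) ^ (n+1) := by positivity
  have hreal : (Cshape * h) ^ (n+1) * IΓ.toReal ≤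
      2 * (A * (2 * L) ^ n) * h ^ n * L ^ (n+1) * IV.toReal +
      8 * (A * (2 * L) ^ n) * h ^ (n+2) * L ^ (n+3) * IG.toReal := by
    have := ENNReal.toReal_mono (by finiteness) hmain
    rw [ENNReal.toReal_add (by finiteness) (by finiteness), ENNReal.toReal_mul, ENNReal.toReal_mul,
      ENNReal.toReal_mul, ENNReal.toReal_ofReal (by positivity), ENNReal.toReal_ofReal (by positivity),
      ENNReal.toReal_ofReal (by positivity)] at this
    exact this
  have hl : (∫ x in G.ΓK Q, v x ^ 2 ∂(sMeas (n+1))) ≤ IΓ.toReal := by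
    refine (Real.le_norm_self _).trans ((norm_integral_le_lintegral_norm (fun x => v x ^ 2)).trans (le_of_eq ?_))
    congr 1
    refine lintegral_congr fun x => ?_
    rw [ofReal_norm_eq_enorm, enorm_pow]
  have hrV : (∫ x in K, v x ^ 2 / M.hsz x) = IV.toReal / H := by
    have : (∫ x in K, v x ^ 2 / M.hsz x) = ∫ x in K, v x ^ 2 / H :=
      setIntegral_congr_fun hKo.measurableSet fun x hx => by
        beta_reduce
        rw [M.hsz_eq Q hQ x hx]
    rw [this, integral_div]
    congr 1
    have hm : AEStronglyMeasurable (fun x => v x ^ 2) (volume.restrict K) :=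
      ((hv.continuousOn.mono subset_closure).pow 2).aestronglyMeasurable hKo.measurableSet
    rw [integral_eq_lintegral_of_nonneg_ae (f := fun x => v x ^ 2)
      (Filter.Eventually.of_forall fun x => sq_nonneg _) hm]
    congr 1
    refine lintegral_congr fun x => ?_
    rw [← enorm_pow, Real.enorm_of_nonneg (by positivity)]
  have hrG : (∫ x in K, M.hsz x * ‖gradient v x‖ ^ 2) = H * IG.toReal := by
    have : (∫ x in K, M.hsz x * ‖gradient v x‖ ^ 2) = ∫ x in K, H * ‖fderiv ℝ v x‖ ^ 2 :=
      setIntegral_congr_fun hKo.measurableSet fun x hx => by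
        beta_reduce
        rw [M.hsz_eq Q hQ x hx, gradient, LinearIsometryEquiv.norm_map]
    rw [this, integral_const_mul]
    congr 1
    rw [integral_eq_lintegral_of_nonneg_ae (Filter.Eventually.of_forall fun x => by positivity)
      ((measurable_fderiv ℝ v).norm.pow_const 2).aestronglyMeasurable]
    congr 1
    refine lintegral_congr fun x => ?_
    rw [ENNReal.ofReal_pow (norm_nonneg _), ofReal_norm_eq_enorm]
  rw [hrV, hrG]
  refine hl.trans ?_
  have hiV : 0 ≤ IV.toReal := ENNReal.toReal_nonneg
  have hiG : 0 ≤ IG.toReal := ENNReal.toReal_nonneg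
  have hL' : (1:ℝ) ≤ L := by exact_mod_cast hL
  set B : ℝ := (A * (2 * L) ^ n : ℝ) with hB
  have hB0 : 0 ≤ B := by positivity
  have s1 : IΓ.toReal ≤ 8 * B * L ^ (n+3) / Cshape ^ (n+1) * (IV.toReal / h + h * IG.toReal) := by
    rw [← mul_le_mul_iff_right₀ hposc]
    refine hreal.trans ?_
    have e : (Cshape * h) ^ (n+1) * (8 * B * L ^ (n+3) / Cshape ^ (n+1) * (IV.toReal / h + h * IG.toReal))
        = 8 * B * h ^ n * L ^ (n+3) * IV.toReal + 8 * B * h ^ (n+2) * L ^ (n+3) * IG.toReal := by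
      rw [mul_pow]
      field_simp
      ring
    rw [e]
    have : (L:ℝ) ^ (n+1) ≤ L ^ (n+3) := pow_le_pow_right₀ hL' (by omega)
    gcongr
    norm_num
  have s2 : IV.toReal / h ≤ L * (IV.toReal / H) := by
    rw [mul_div_assoc', div_le_div_iff₀ hdQ hdK]
    nlinarith [mul_le_mul_of_nonneg_left hKQ hiV]
  have s3 : h * IG.toReal ≤ L * (H * IG.toReal) := by
    rw [← mul_assoc]; gcongr
  calc _ ≤ _ := s1
    _ ≤ 8 * B * L ^ (n+3) / Cshape ^ (n+1) * (L * (IV.toReal / H) + L * (H * IG.toReal)) := by gcongr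
    _ = 8 * B * L ^ (n+4) / Cshape ^ (n+1) * (IV.toReal / H + H * IG.toReal) := by ring
    _ ≤ _ := by
      have : 0 ≤ IV.toReal / H + H * IG.toReal := by positivity
      gcongr
      linarith

end TraceAux

noncomputable section

/-- Lemma A.1, after Hansbo–Hansbo.  There exists `C > 0`,
depending on `Γ_D` (i.e. on the fixed geometric setting) but independent of how
the mesh intersects the boundary, such that for every element `K ∈ M_{0,h}` of
every mesh of the family and every `v ∈ H¹(K)`,
`‖v‖²_{L²(Γ_K)} ≤ C (‖h^{-1/2} v‖²_{L²(K)} + ‖h^{1/2} ∇v‖²_{L²(K)})`,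
where `Γ_K = Γ_D ∩ cl(K)`. -/
theorem trace_inequality_cut_elements
    {d p : ℕ} {θ Cshape Cnb CΓ : ℝ} (G : Geom d) {ι : Type}
    (M : ι → Mesh d p G θ Cshape Cnb CΓ) :
    ∃ C > (0 : ℝ), ∀ i, ∀ Q ∈ (M i).pMesh, ∀ v : Euc d → ℝ,
      ContDiffOn ℝ 1 v (closure (G.phys Q)) →
      (∫ x in G.ΓK Q, v x ^ 2 ∂(sMeas d))
        ≤ C * ((∫ x in G.phys Q, v x ^ 2 / (M i).hsz x)
            + ∫ x in G.phys Q, (M i).hsz x * ‖gradient v x‖ ^ 2) := by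
  rcases d with _ | n
  · refine ⟨1, one_pos, fun i Q hQ v hv => ?_⟩
    have hΓ : G.ΓK Q = ∅ := by
      have h1 : frontier G.Ω = ∅ := by
        rcases G.Ω.eq_empty_or_nonempty with h | h
        · simp [h]
        · have : Subsingleton (Euc 0) := inferInstanceAs (Subsingleton (EuclideanSpace ℝ (Fin 0)))
          rw [Subsingleton.eq_univ_of_nonempty h, frontier_univ]
      exact subset_eq_empty (inter_subset_left.trans G.ΓD_sub) h1
    rw [hΓ]
    simp only [Measure.restrict_empty, integral_zero_measure, one_mul]
    exact add_nonneg
      (integral_nonneg fun x => div_nonneg (sq_nonneg _) ((M i).hsz_pos x).le)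
      (integral_nonneg fun x => mul_nonneg ((M i).hsz_pos x).le (sq_nonneg _))
  · have hFl : LipschitzOnWith (max 1 G.biLip) G.F (closure (unitCube (n+1))) :=
      G.F_lip.weaken (le_max_right _ _)
    have hFil : LipschitzOnWith (max 1 G.biLip) G.Finv (closure G.Ω₀) :=
      G.Finv_lip.weaken (le_max_right _ _)
    have hb : Bornology.IsBounded G.Ω := by
      have h1 : IsCompact (G.F '' closure (unitCube (n+1))) :=
        (unitCube_bdd _).isCompact_closure.image_of_continuousOn hFl.continuousOn
      refine h1.isBounded.subset ?_
      rw [G.trim_def, ← G.F_image]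
      exact diff_subset.trans (image_mono subset_closure)
    obtain ⟨A, hA⟩ := frontier_bound G.Ω G.Ω_open hb G.lipschitz_bdry
    rcases isEmpty_or_nonempty ι with hι | ⟨⟨i₀⟩⟩
    · exact ⟨1, one_pos, fun i => (hι.false i).elim⟩
    have hCs := (M i₀).shape_pos
    refine ⟨8 * (A * (2 * (max 1 G.biLip : ℝ≥0)) ^ n) * (max 1 G.biLip : ℝ≥0) ^ (n+4)
      / Cshape ^ (n+1) + 1, by positivity, fun i Q hQ v hv => ?_⟩
    exact elem_bound G (max 1 G.biLip) A (le_max_left _ _) hFl hFil hA (M i) Q hQ v hv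

end
end

section
/- There exists C > 0, depending on Γ_D but independent of how the mesh intersects the boundary, such that for every element K ∈ M_{0,h} and every v_h ∈ Ṽ_h, ‖∂v_h/∂n‖_{L²(Γ_K)} ≤ C ‖h^{−1/2} ∇v_h‖_{L²(K)}, where Γ_K = Γ_D ∩ cl(K) and ∂v_h/∂n is the normal derivative on Γ_D. -/
open Set Metric MeasureTheory
open scoped InnerProductSpace NNReal ENNReal

section PolyPart

variable {d : ℕ}

/-- exponent vectors as finitely supported functions -/
noncomputable def embExp {d p : ℕ} (s : Fin d → Fin (p + 1)) : Fin d →₀ ℕ :=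
  Finsupp.equivFunOnFinite.symm (fun i => (s i : ℕ))

lemma embExp_apply {d p : ℕ} (s : Fin d → Fin (p + 1)) (i : Fin d) :
    embExp s i = (s i : ℕ) := rfl

lemma embExp_inj {d p : ℕ} {s t : Fin d → Fin (p + 1)} (h : embExp s = embExp t) : s = t := by
  funext i
  have := DFunLike.congr_fun h i
  exact Fin.ext this

/-- polynomial with given coefficients -/
noncomputable def polyOf {d p : ℕ} (c : (Fin d → Fin (p + 1)) → ℝ) : MvPolynomial (Fin d) ℝ :=
  ∑ s, MvPolynomial.monomial (embExp s) (c s)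

lemma coeff_polyOf {d p : ℕ} (c : (Fin d → Fin (p + 1)) → ℝ) (s : Fin d → Fin (p + 1)) :
    MvPolynomial.coeff (embExp s) (polyOf c) = c s := by
  classical
  unfold polyOf
  rw [MvPolynomial.coeff_sum, Finset.sum_eq_single s]
  · simp
  · intro t _ hts
    rw [MvPolynomial.coeff_monomial, if_neg]
    exact fun h => hts (embExp_inj h)
  · simp

lemma exists_polyOf {d p : ℕ} (P : MvPolynomial (Fin d) ℝ) (hP : ∀ i, P.degreeOf i ≤ p) :
    ∃ c : (Fin d → Fin (p + 1)) → ℝ, polyOf c = P := by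
  classical
  refine ⟨fun s => P.coeff (embExp s), ?_⟩
  ext m
  by_cases hm : ∀ i, m i ≤ p
  · have : m = embExp (p := p) (fun i => ⟨m i, Nat.lt_succ_of_le (hm i)⟩) := by
      ext i; rfl
    rw [this, coeff_polyOf]
  · have h0 : P.coeff m = 0 := by
      by_contra h
      exact hm fun i => MvPolynomial.degreeOf_le_iff.1 (hP i) m (MvPolynomial.mem_support_iff.2 h)
    rw [h0]
    unfold polyOf
    rw [MvPolynomial.coeff_sum]
    refine Finset.sum_eq_zero fun s _ => ?_
    rw [MvPolynomial.coeff_monomial, if_neg]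
    rintro rfl
    exact hm fun i => Nat.le_of_lt_succ (s i).2

lemma eval_polyOf {d p : ℕ} (c : (Fin d → Fin (p + 1)) → ℝ) (x : Fin d → ℝ) :
    MvPolynomial.eval x (polyOf c) = ∑ s, c s * ∏ i, x i ^ (s i : ℕ) := by
  unfold polyOf
  rw [map_sum]
  refine Finset.sum_congr rfl fun s _ => ?_
  rw [MvPolynomial.eval_monomial, Finsupp.prod_fintype _ _ (by simp)]
  rfl

lemma mem_closure_unitCube {d : ℕ} (t : Euc d) :
    t ∈ closure (unitCube d) ↔ ∀ i, t i ∈ Icc (0 : ℝ) 1 := by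
  have h1 : unitCube d = (EuclideanSpace.equiv (Fin d) ℝ).toHomeomorph ⁻¹'
      (Set.pi univ fun _ => Ioo (0 : ℝ) 1) := by
    ext x; simp [unitCube]
  rw [h1, ← Homeomorph.preimage_closure, closure_pi_set]
  simp only [closure_Ioo (zero_ne_one' ℝ), mem_preimage, mem_univ_pi]
  rfl

lemma isOpen_unitCube (d : ℕ) : IsOpen (unitCube d) := by
  have h1 : unitCube d = (EuclideanSpace.equiv (Fin d) ℝ).toHomeomorph ⁻¹'
      (Set.pi univ fun _ => Ioo (0 : ℝ) 1) := by
    ext x; simp [unitCube]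
  rw [h1]
  exact (isOpen_set_pi finite_univ fun _ _ => isOpen_Ioo).preimage
    (Homeomorph.continuous _)

lemma isCompact_closure_unitCube (d : ℕ) : IsCompact (closure (unitCube d)) := by
  have h1 : closure (unitCube d) = (EuclideanSpace.equiv (Fin d) ℝ).toHomeomorph ⁻¹'
      (Set.pi univ fun _ => Icc (0 : ℝ) 1) := by
    ext x; rw [mem_closure_unitCube]; simp only [mem_preimage, mem_univ_pi]; rfl
  rw [h1, Homeomorph.isCompact_preimage]
  exact isCompact_univ_pi fun _ => isCompact_Icc

lemma convex_closure_unitCube (d : ℕ) : Convex ℝ (closure (unitCube d)) := by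
  refine Convex.closure ?_
  intro x hx y hy a b ha hb hab i
  have := convex_Ioo (0 : ℝ) 1 (hx i) (hy i) ha hb hab
  simpa using this

lemma unitCube_nonempty (d : ℕ) : (unitCube d).Nonempty :=
  ⟨WithLp.toLp 2 (fun _ => 1 / 2), fun i => by simp; norm_num⟩

lemma uniqueDiffOn_cube (d : ℕ) : UniqueDiffOn ℝ (closure (unitCube d)) :=
  uniqueDiffOn_convex (convex_closure_unitCube d)
    ((unitCube_nonempty d).mono ((isOpen_unitCube d).subset_interior_iff.2 subset_closure))

lemma continuous_evalP {d : ℕ} (P : MvPolynomial (Fin d) ℝ) :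
    Continuous fun x : Euc d => MvPolynomial.eval (fun i => x i) P :=
  (MvPolynomial.continuous_eval P).comp (by fun_prop)

lemma integral_poly_pos {d p : ℕ} (c : (Fin d → Fin (p + 1)) → ℝ) (hc : c ≠ 0) :
    0 < ∫ x in closure (unitCube d),
      (MvPolynomial.eval (fun i => (x : Euc d) i) (polyOf c)) ^ 2 := by
  have hcont := (continuous_evalP (polyOf c)).pow 2
  have hint := hcont.continuousOn.integrableOn_compact (μ := volume)
    (isCompact_closure_unitCube d)
  refine lt_of_le_of_ne (integral_nonneg fun _ => by positivity) fun h0 => hc ?_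
  have h1 := (integral_eq_zero_iff_of_nonneg (fun _ => sq_nonneg _) hint).1 h0.symm
  have h2 := ae_restrict_of_ae_restrict_of_subset
    (subset_closure : unitCube d ⊆ closure (unitCube d)) h1
  have h3 := Measure.eqOn_open_of_ae_eq h2 (isOpen_unitCube d) hcont.continuousOn
    continuousOn_const
  have h4 : polyOf c = 0 := by
    refine MvPolynomial.funext_set (fun _ => Ioo (0 : ℝ) 1)
      (fun _ => Ioo_infinite zero_lt_one) fun x hx => ?_
    have := h3 (x := WithLp.toLp 2 x) (fun i => hx i trivial)
    simpa using this
  funext s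
  rw [← coeff_polyOf c s, h4]; simp

lemma poly_sup_le {d : ℕ} (p : ℕ) : ∃ κ > (0 : ℝ), ∀ P : MvPolynomial (Fin d) ℝ,
    (∀ i, P.degreeOf i ≤ p) → ∀ t ∈ closure (unitCube d),
      (MvPolynomial.eval (fun i => t i) P) ^ 2 ≤
        κ * ∫ x in closure (unitCube d), (MvPolynomial.eval (fun i => (x : Euc d) i) P) ^ 2 := by
  let S := Fin d → Fin (p + 1)
  let I : (S → ℝ) → ℝ := fun c => ∫ x in closure (unitCube d),
      (MvPolynomial.eval (fun i => (x : Euc d) i) (polyOf c)) ^ 2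
  have hIc : Continuous I := by
    refine continuous_parametric_integral_of_continuous ?_ (isCompact_closure_unitCube d)
    simp only [eval_polyOf, Function.uncurry_def]
    fun_prop
  have hcomp : IsCompact (sphere (0 : S → ℝ) 1) := isCompact_sphere _ _
  have hne : (sphere (0 : S → ℝ) 1).Nonempty := NormedSpace.sphere_nonempty.2 zero_le_one
  obtain ⟨c0, hc0, hmin⟩ := hcomp.exists_isMinOn hne hIc.continuousOn
  have hm : 0 < I c0 := integral_poly_pos c0 (by
    rintro rfl; simp at hc0)
  have hlow : ∀ c : S → ℝ, ‖c‖ ^ 2 * I c0 ≤ I c := by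
    intro c
    by_cases hc : c = 0
    · subst hc
      simp only [norm_zero, ne_eq, OfNat.ofNat_ne_zero, not_false_eq_true, zero_pow, zero_mul]
      exact integral_nonneg fun _ => by positivity
    have hn : ‖c‖ ≠ 0 := norm_ne_zero_iff.2 hc
    have h1 : I c0 ≤ I (‖c‖⁻¹ • c) := hmin (by
      simp [norm_smul, hn])
    have h2 : I (‖c‖⁻¹ • c) = (‖c‖⁻¹) ^ 2 * I c := by
      simp only [I]
      rw [← integral_const_mul]
      congr 1
      funext x
      simp only [eval_polyOf, Pi.smul_apply, smul_eq_mul, mul_assoc]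
      rw [← Finset.mul_sum, mul_pow]
    rw [h2] at h1
    calc ‖c‖ ^ 2 * I c0 ≤ ‖c‖ ^ 2 * ((‖c‖⁻¹) ^ 2 * I c) := by gcongr
      _ = I c := by field_simp
  refine ⟨(Fintype.card S : ℝ) ^ 2 / I c0 , by
    have : 0 < Fintype.card S := Fintype.card_pos
    positivity, ?_⟩
  intro P hP t ht
  obtain ⟨c, rfl⟩ := exists_polyOf P hP
  have hb : |MvPolynomial.eval (fun i => t i) (polyOf c)| ≤ Fintype.card S * ‖c‖ := by
    rw [eval_polyOf]
    refine (Finset.abs_sum_le_sum_abs _ _).trans ?_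
    rw [← nsmul_eq_mul, ← Finset.card_univ]
    refine Finset.sum_le_card_nsmul _ _ _ fun s _ => ?_
    rw [abs_mul]
    have h1 : |∏ i, t i ^ (s i : ℕ)| ≤ 1 := by
      rw [Finset.abs_prod]
      refine Finset.prod_le_one (fun _ _ => abs_nonneg _) fun i _ => ?_
      have := (mem_closure_unitCube t).1 ht i
      rw [abs_pow, abs_of_nonneg this.1]
      exact pow_le_one₀ this.1 this.2
    calc |c s| * |∏ i, t i ^ (s i : ℕ)| ≤ ‖c‖ * 1 := by
          gcongr
          exact norm_le_pi_norm c s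
      _ = ‖c‖ := mul_one _
  have := hlow c
  calc (MvPolynomial.eval (fun i => t i) (polyOf c)) ^ 2
      ≤ (Fintype.card S * ‖c‖) ^ 2 := by
        rw [← sq_abs]; gcongr
    _ = (Fintype.card S : ℝ) ^ 2 / I c0 * (‖c‖ ^ 2 * I c0) := by field_simp
    _ ≤ _ := by gcongr

lemma hasFDerivAt_evalP {d : ℕ} (P : MvPolynomial (Fin d) ℝ) (x : Euc d) :
    HasFDerivAt (fun x : Euc d => MvPolynomial.eval (fun i => x i) P)
      (∑ i, MvPolynomial.eval (fun i => x i) (MvPolynomial.pderiv i P) •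
        (EuclideanSpace.proj i : Euc d →L[ℝ] ℝ)) x := by
  classical
  induction P using MvPolynomial.induction_on with
  | C a =>
    simpa using hasFDerivAt_const a x
  | add p q hp hq =>
    have h := (hp.add hq).congr_fderiv (f' := _) (g' := ∑ i, MvPolynomial.eval (fun i => x i)
      (MvPolynomial.pderiv i (p + q)) • (EuclideanSpace.proj i : Euc d →L[ℝ] ℝ)) (by
        simp [add_smul, Finset.sum_add_distrib])
    refine h.congr_of_eventuallyEq (Filter.Eventually.of_forall fun y => ?_)
    simp
  | mul_X p j hp =>
    have hj : HasFDerivAt (fun x : Euc d => x j) (EuclideanSpace.proj j : Euc d →L[ℝ] ℝ) x :=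
      (EuclideanSpace.proj j : Euc d →L[ℝ] ℝ).hasFDerivAt
    have h := (hp.mul hj).congr_fderiv (g' := ∑ i, MvPolynomial.eval (fun i => x i)
      (MvPolynomial.pderiv i (p * MvPolynomial.X j)) •
        (EuclideanSpace.proj i : Euc d →L[ℝ] ℝ)) ?_
    · refine h.congr_of_eventuallyEq (Filter.Eventually.of_forall fun y => ?_)
      simp
    symm
    simp only [MvPolynomial.pderiv_mul, map_add, map_mul, MvPolynomial.eval_X, add_smul,
      Finset.sum_add_distrib, MvPolynomial.pderiv_X, Finset.smul_sum, smul_smul]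
    rw [add_comm]
    congr 1
    · rw [Finset.sum_eq_single j]
      · simp
      · intro b _ hb
        simp [hb.symm]
      · simp
    · refine Finset.sum_congr rfl fun i _ => ?_
      rw [mul_comm]

lemma degreeOf_pderiv_le' {d p : ℕ} (P : MvPolynomial (Fin d) ℝ) (hP : ∀ i, P.degreeOf i ≤ p)
    (i j : Fin d) : (MvPolynomial.pderiv i P).degreeOf j ≤ p := by
  rw [MvPolynomial.degreeOf_le_iff]
  intro m hm
  rw [MvPolynomial.mem_support_iff, MvPolynomial.coeff_pderiv] at hm
  have h1 := MvPolynomial.degreeOf_le_iff.1 (hP j) (m + Finsupp.single i 1)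
    (MvPolynomial.mem_support_iff.2 (left_ne_zero_of_mul hm))
  simp only [Finsupp.coe_add, Pi.add_apply] at h1
  omega

/-- gradient version of the inverse estimate on the reference cube -/
lemma poly_grad_sup_le {d : ℕ} (p : ℕ) : ∃ κ > (0 : ℝ), ∀ f : Euc d → ℝ, IsQPoly p f →
    ∀ t ∈ closure (unitCube d),
      ‖fderiv ℝ f t‖ ^ 2 ≤ κ * ∫ x in closure (unitCube d), ‖fderiv ℝ f x‖ ^ 2 := by
  obtain ⟨κ, hκ, H⟩ := poly_sup_le (d := d) p
  refine ⟨(d : ℝ) ^ 2 * κ + 1, by positivity, ?_⟩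
  rintro f ⟨P, hP, hf⟩ t ht
  obtain rfl : f = fun x : Euc d => MvPolynomial.eval (fun i => x i) P := funext hf
  have hfd := fun x => (hasFDerivAt_evalP P x).fderiv
  set J := ∫ x in closure (unitCube d),
    ‖fderiv ℝ (fun x : Euc d => MvPolynomial.eval (fun i => x i) P) x‖ ^ 2 with hJ
  have hJ0 : 0 ≤ J := integral_nonneg fun _ => by positivity
  have hcontD : Continuous (fderiv ℝ (fun x : Euc d => MvPolynomial.eval (fun i => x i) P)) := by
    have : fderiv ℝ (fun x : Euc d => MvPolynomial.eval (fun i => x i) P) = fun x =>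
      ∑ i, MvPolynomial.eval (fun i => x i) (MvPolynomial.pderiv i P) •
        (EuclideanSpace.proj i : Euc d →L[ℝ] ℝ) := funext hfd
    rw [this]
    exact continuous_finsetSum _ fun i _ => (continuous_evalP _).smul continuous_const
  have hi : ∀ i, |MvPolynomial.eval (fun i => t i) (MvPolynomial.pderiv i P)| ≤ √(κ * J) := by
    intro i
    refine Real.abs_le_sqrt ((H _ (degreeOf_pderiv_le' P hP i) t ht).trans ?_)
    refine mul_le_mul_of_nonneg_left ?_ hκ.le
    refine setIntegral_mono_on
      (((continuous_evalP _).pow 2).continuousOn.integrableOn_compact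
        (isCompact_closure_unitCube d))
      ((hcontD.norm.pow 2).continuousOn.integrableOn_compact
        (isCompact_closure_unitCube d)) isClosed_closure.measurableSet fun x _ => ?_
    have h1 := (fderiv ℝ (fun x : Euc d => MvPolynomial.eval (fun i => x i) P) x).le_opNorm
      (EuclideanSpace.single i 1)
    rw [PiLp.norm_single, norm_one, mul_one] at h1
    have h2 : fderiv ℝ (fun x : Euc d => MvPolynomial.eval (fun i => x i) P) x
      (EuclideanSpace.single i 1) =
        MvPolynomial.eval (fun i => x i) (MvPolynomial.pderiv i P) := by
      rw [hfd]
      simp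
    rw [h2, Real.norm_eq_abs] at h1
    rw [← sq_abs]
    gcongr
  have hn : ‖fderiv ℝ (fun x : Euc d => MvPolynomial.eval (fun i => x i) P) t‖
      ≤ d * √(κ * J) := by
    rw [hfd]
    refine (norm_sum_le _ _).trans ?_
    have : (d : ℝ) * √(κ * J) = (Finset.univ : Finset (Fin d)).card • √(κ * J) := by simp
    rw [this]
    refine Finset.sum_le_card_nsmul _ _ _ fun i _ => ?_
    rw [norm_smul]
    have hp : ‖(EuclideanSpace.proj i : Euc d →L[ℝ] ℝ)‖ ≤ 1 :=
      ContinuousLinearMap.opNorm_le_bound _ zero_le_one fun x => by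
        simpa using PiLp.norm_apply_le x i
    calc _ ≤ √(κ * J) * 1 := by
          gcongr
          exact hi i
      _ = _ := mul_one _
  calc _ ≤ (d * √(κ * J)) ^ 2 := by gcongr
    _ = d ^ 2 * κ * J := by rw [mul_pow, Real.sq_sqrt (by positivity)]; ring
    _ ≤ _ := by nlinarith

lemma isQPoly_affine {d p : ℕ} {f : Euc d → ℝ} (hf : IsQPoly p f) (a b : Fin d → ℝ) :
    IsQPoly p fun t : Euc d => f (WithLp.toLp 2 fun i => a i + b i * t i) := by
  classical
  obtain ⟨P, hP, hf⟩ := hf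
  refine ⟨MvPolynomial.bind₁ (fun i => MvPolynomial.C (a i) + MvPolynomial.C (b i) *
    MvPolynomial.X i) P, ?_, ?_⟩
  · intro j
    rw [MvPolynomial.bind₁, MvPolynomial.aeval_def, MvPolynomial.eval₂_eq']
    refine (MvPolynomial.degreeOf_sum_le _ _ _).trans (Finset.sup_le fun s hs => ?_)
    have h1 := MvPolynomial.degreeOf_le_iff.1 (hP j) s hs
    rw [MvPolynomial.algebraMap_eq]
    refine (MvPolynomial.degreeOf_C_mul_le _ _ _).trans ?_
    refine (MvPolynomial.degreeOf_prod_le _ _ _).trans ?_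
    refine le_trans ?_ h1
    calc _ ≤ ∑ i, if i = j then s i else 0 := by
          refine Finset.sum_le_sum fun i _ => ?_
          refine (MvPolynomial.degreeOf_pow_le _ _ _).trans ?_
          have h2 : MvPolynomial.degreeOf j (MvPolynomial.C (a i) + MvPolynomial.C (b i) *
              MvPolynomial.X i) ≤ if i = j then 1 else 0 := by
            refine (MvPolynomial.degreeOf_add_le _ _ _).trans ?_
            rw [MvPolynomial.degreeOf_C]
            refine max_le (Nat.zero_le _) ((MvPolynomial.degreeOf_C_mul_le _ _ _).trans ?_)
            rw [MvPolynomial.degreeOf_X]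
            simp only [eq_comm, le_refl]
          calc _ ≤ s i * if i = j then 1 else 0 := Nat.mul_le_mul_left _ h2
            _ = _ := by split_ifs <;> simp
      _ = s j := by simp
  · intro x
    have h1 := MvPolynomial.eval₂Hom_bind₁ (RingHom.id ℝ) (fun i => x i)
      (fun i => MvPolynomial.C (a i) + MvPolynomial.C (b i) * MvPolynomial.X i) P
    refine (hf _).trans (Eq.trans ?_ h1.symm)
    have h2 : (fun i => MvPolynomial.eval₂Hom (RingHom.id ℝ) (fun i => x i)
        (MvPolynomial.C (a i) + MvPolynomial.C (b i) * MvPolynomial.X i)) =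
        fun i => a i + b i * x i := by funext i; simp
    rw [h2]; rfl

end PolyPart
section CorePart

lemma restrict_closure_cube (d : ℕ) :
    (volume : Measure (Euc d)).restrict (closure (unitCube d)) =
      volume.restrict (unitCube d) := by
  refine Measure.restrict_congr_set (closure_ae_eq_of_null_frontier ?_)
  refine Convex.addHaar_frontier _ ?_
  intro x hx y hy a b ha hb hab i
  have := convex_Ioo (0 : ℝ) 1 (hx i) (hy i) ha hb hab
  simpa using this

/-- Lipschitz maps do not increase volume too much. -/
lemma volume_image_le {d : ℕ} (Ψ : Euc d → Euc d) (L : ℝ≥0) (A : Set (Euc d))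
    (h : LipschitzOnWith L Ψ A) :
    volume (Ψ '' A) ≤ (L : ℝ≥0∞) ^ d * volume A := by
  have hf : (Module.finrank ℝ (Euc d) : ℝ) = (d : ℝ) := by simp
  have h1 := h.hausdorffMeasure_image_le (d := (Module.finrank ℝ (Euc d) : ℝ)) (by positivity)
  have h2 := Measure.isAddLeftInvariant_eq_smul (volume : Measure (Euc d))
    (μH[(Module.finrank ℝ (Euc d) : ℝ)])
  have h3 : (L : ℝ≥0∞) ^ (Module.finrank ℝ (Euc d) : ℝ) = (L : ℝ≥0∞) ^ d := by
    rw [hf, ENNReal.rpow_natCast]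
  rw [h3] at h1
  rw [h2]
  simp only [Measure.smul_apply, ENNReal.smul_def, smul_eq_mul]
  calc _ ≤ _ := mul_le_mul_right h1 _
    _ = _ := by ring

lemma anti_fderiv {d : ℕ} (Θ : Euc d → Euc d) (L' : ℝ≥0)
    (hΘ : ContDiffOn ℝ 1 Θ (closure (unitCube d)))
    (hA : ∀ s ∈ closure (unitCube d), ∀ t ∈ closure (unitCube d),
      dist s t ≤ L' * dist (Θ s) (Θ t)) :
    ∀ t ∈ closure (unitCube d), ∀ w : Euc d,
      ‖w‖ ≤ L' * ‖fderivWithin ℝ Θ (closure (unitCube d)) t w‖ := by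
  intro t ht w
  have hcont := hΘ.continuousOn_fderivWithin (uniqueDiffOn_cube d) le_rfl
  have hc2 : ContinuousOn (fun t => L' * ‖fderivWithin ℝ Θ (closure (unitCube d)) t w‖)
      (closure (unitCube d)) :=
    continuousOn_const.mul (hcont.clm_apply continuousOn_const).norm
  refine le_on_closure (f := fun _ => ‖w‖) (s := unitCube d) ?_ continuousOn_const hc2 ht
  intro t ht
  have hn : closure (unitCube d) ∈ nhds  t :=
    Filter.mem_of_superset ((isOpen_unitCube d).mem_nhds ht) subset_closure
  have hd : HasFDerivAt Θ (fderivWithin ℝ Θ (closure (unitCube d)) t) t :=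
    ((hΘ.differentiableOn one_ne_zero t (subset_closure ht)).hasFDerivWithinAt).hasFDerivAt hn
  have hl : HasDerivAt (fun e : ℝ => Θ (t + e • w))
      (fderivWithin ℝ Θ (closure (unitCube d)) t w) 0 := by
    have h1 : HasDerivAt (fun e : ℝ => t + e • w) w 0 := by
      simpa using ((hasDerivAt_id (0 : ℝ)).smul_const w).const_add t
    have h2 : HasFDerivAt Θ (fderivWithin ℝ Θ (closure (unitCube d)) t) (t + (0 : ℝ) • w) := by
      simpa using hd
    exact h2.comp_hasDerivAt (0 : ℝ) h1
  have hs := (hl.tendsto_slope_zero.norm).const_mul (L' : ℝ)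
  refine ge_of_tendsto hs ?_
  have hev : ∀ᶠ e : ℝ in nhdsWithin 0 {0}ᶜ, t + e • w ∈ unitCube d := by
    have hc : Continuous fun e : ℝ => t + e • w := by fun_prop
    have := (hc.tendsto 0).eventually ((isOpen_unitCube d).mem_nhds (by simpa using ht))
    exact this.filter_mono nhdsWithin_le_nhds
  filter_upwards [hev, self_mem_nhdsWithin] with e he he0
  have he0' : e ≠ 0 := he0
  have h1 := hA _ (subset_closure he) _ (subset_closure ht)
  rw [dist_eq_norm, dist_eq_norm] at h1
  simp only [add_sub_cancel_left, norm_smul] at h1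
  simp only [zero_add, zero_smul, add_zero, norm_smul, norm_inv]
  have : 0 < ‖e‖ := norm_pos_iff.2 he0'
  calc ‖w‖ = ‖e‖⁻¹ * (‖e‖ * ‖w‖) := by field_simp
    _ ≤ ‖e‖⁻¹ * (L' * ‖Θ (t + e • w) - Θ t‖) := by gcongr
    _ = _ := by ring

lemma norm_gradient_eq {d : ℕ} (v : Euc d → ℝ) (x : Euc d) :
    ‖gradient v x‖ = ‖fderiv ℝ v x‖ := by
  simp [gradient]

lemma core_estimate {d p : ℕ} (κ : ℝ) (hκ : 0 < κ)
    (H : ∀ f : Euc d → ℝ, IsQPoly p f → ∀ t ∈ closure (unitCube d),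
      ‖fderiv ℝ f t‖ ^ 2 ≤ κ * ∫ x in closure (unitCube d), ‖fderiv ℝ f x‖ ^ 2)
    (Θ : Euc d → Euc d) (L L' : ℝ≥0)
    (hΘ : ContDiffOn ℝ 1 Θ (closure (unitCube d)))
    (hL : LipschitzOnWith L Θ (closure (unitCube d)))
    (hA : ∀ s ∈ closure (unitCube d), ∀ t ∈ closure (unitCube d),
      dist s t ≤ L' * dist (Θ s) (Θ t))
    (hK : IsOpen (Θ '' unitCube d)) (v : Euc d → ℝ)
    (hv : ContDiffOn ℝ 1 v (closure (Θ '' unitCube d)))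
    (q : Euc d → ℝ) (hq : IsQPoly p q) (hvq : EqOn (v ∘ Θ) q (unitCube d)) :
    ∀ x ∈ closure (Θ '' unitCube d), ‖gradient v x‖ ^ 2 ≤
      κ * (L' : ℝ) ^ 2 * (L : ℝ) ^ 2 * (L' : ℝ) ^ d *
        ∫ x in Θ '' unitCube d, ‖gradient v x‖ ^ 2 := by
  classical
  have hUo := isOpen_unitCube d
  have hanti := anti_fderiv Θ L' hΘ hA
  have hqd : Differentiable ℝ q := by
    obtain ⟨P, -, hP⟩ := hq
    obtain rfl : q = fun x : Euc d => MvPolynomial.eval (fun i => x i) P := funext hP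
    exact fun x => (hasFDerivAt_evalP P x).differentiableAt
  have hqc : Continuous (fderiv ℝ q) := by
    obtain ⟨P, -, hP⟩ := hq
    obtain rfl : q = fun x : Euc d => MvPolynomial.eval (fun i => x i) P := funext hP
    have : fderiv ℝ (fun x : Euc d => MvPolynomial.eval (fun i => x i) P) = fun x =>
      ∑ i, MvPolynomial.eval (fun i => x i) (MvPolynomial.pderiv i P) •
        (EuclideanSpace.proj i : Euc d →L[ℝ] ℝ) :=
      funext fun x => (hasFDerivAt_evalP P x).fderiv
    rw [this]
    exact continuous_finsetSum _ fun i _ => (continuous_evalP _).smul continuous_const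
  have hmaps : MapsTo Θ (closure (unitCube d)) (closure (Θ '' unitCube d)) := by
    intro t ht
    exact (hL.continuousOn.image_closure) (mem_image_of_mem _ ht)
  have hvq' : EqOn (v ∘ Θ) q (closure (unitCube d)) :=
    hvq.of_subset_closure (hv.continuousOn.comp hL.continuousOn hmaps)
      hqd.continuous.continuousOn subset_closure subset_rfl
  have hclK : closure (Θ '' unitCube d) ⊆ Θ '' closure (unitCube d) :=
    closure_minimal (image_mono subset_closure)
      ((isCompact_closure_unitCube d).image_of_continuousOn hL.continuousOn).isClosed
  -- upper bound of the physical gradient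
  have hup : ∀ t ∈ closure (unitCube d), ‖fderiv ℝ v (Θ t)‖ ≤ L' * ‖fderiv ℝ q t‖ := by
    intro t ht
    by_cases hdv : DifferentiableAt ℝ v (Θ t)
    swap
    · rw [fderiv_zero_of_not_differentiableAt hdv, norm_zero]; positivity
    set A := fderivWithin ℝ Θ (closure (unitCube d)) t with hAdef
    have hΘd : HasFDerivWithinAt Θ A (closure (unitCube d)) t :=
      (hΘ.differentiableOn one_ne_zero t ht).hasFDerivWithinAt
    have h1 : HasFDerivWithinAt (v ∘ Θ) ((fderiv ℝ v (Θ t)).comp A) (closure (unitCube d)) t :=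
      hdv.hasFDerivAt.comp_hasFDerivWithinAt t hΘd
    have h2 : HasFDerivWithinAt (v ∘ Θ) (fderiv ℝ q t) (closure (unitCube d)) t :=
      ((hqd t).hasFDerivAt.hasFDerivWithinAt).congr hvq' (hvq' ht)
    have h3 := (uniqueDiffOn_cube d t ht).eq h1 h2
    have hinj : Function.Injective (A : Euc d →ₗ[ℝ] Euc d) := by
      rw [← LinearMap.ker_eq_bot, LinearMap.ker_eq_bot']
      intro w hw
      have hw' : A w = 0 := hw
      have := hanti t ht w
      rw [← hAdef, hw', norm_zero, mul_zero] at this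
      exact norm_le_zero_iff.1 this
    have hsurj := LinearMap.injective_iff_surjective.1 hinj
    refine ContinuousLinearMap.opNorm_le_bound _ (by positivity) fun u => ?_
    obtain ⟨w, hw⟩ := hsurj u
    have hw' : A w = u := hw
    subst hw'
    have h4 : fderiv ℝ v (Θ t) (A w) = fderiv ℝ q t w := by rw [← h3]; rfl
    rw [h4]
    calc ‖fderiv ℝ q t w‖ ≤ ‖fderiv ℝ q t‖ * ‖w‖ := ContinuousLinearMap.le_opNorm _ _
      _ ≤ ‖fderiv ℝ q t‖ * (L' * ‖A w‖) := by gcongr; exact hanti t ht w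
      _ = _ := by ring
  have hdvK : ∀ x ∈ Θ '' unitCube d, DifferentiableAt ℝ v x := fun x hx =>
    (hv.differentiableOn one_ne_zero x (subset_closure hx)).differentiableAt
      (Filter.mem_of_superset (hK.mem_nhds hx) subset_closure)
  -- lower bound
  have hlow : ∀ t ∈ unitCube d, ‖fderiv ℝ q t‖ ≤ L * ‖fderiv ℝ v (Θ t)‖ := by
    intro t ht
    have hn : closure (unitCube d) ∈ nhds  t :=
      Filter.mem_of_superset (hUo.mem_nhds ht) subset_closure
    have hd : HasFDerivAt Θ (fderiv ℝ Θ t) t :=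
      ((hΘ.differentiableOn one_ne_zero t (subset_closure ht)).differentiableAt hn).hasFDerivAt
    have h1 := (hdvK _ (mem_image_of_mem _ ht)).hasFDerivAt.comp t hd
    have h2 : HasFDerivAt q ((fderiv ℝ v (Θ t)).comp (fderiv ℝ Θ t)) t :=
      h1.congr_of_eventuallyEq (Filter.eventuallyEq_of_mem (hUo.mem_nhds ht) hvq.symm)
    rw [h2.fderiv]
    refine (ContinuousLinearMap.opNorm_comp_le _ _).trans ?_
    rw [mul_comm]
    gcongr
    exact norm_fderiv_le_of_lipschitzOn ℝ hn hL
  -- integrability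
  have hKc : IsCompact (Θ '' closure (unitCube d)) :=
    (isCompact_closure_unitCube d).image_of_continuousOn hL.continuousOn
  have hKfin : volume (Θ '' unitCube d) < ∞ :=
    (measure_mono (image_mono subset_closure)).trans_lt hKc.measure_lt_top
  obtain ⟨B, hB⟩ := (isCompact_closure_unitCube d).exists_bound_of_continuousOn hqc.continuousOn
  have hfc : ContinuousOn (fun x => ‖fderiv ℝ v x‖ ^ 2) (Θ '' unitCube d) :=
    (((hv.mono subset_closure).continuousOn_fderiv_of_isOpen hK le_rfl).norm).pow 2
  have hint : IntegrableOn (fun x => ‖fderiv ℝ v x‖ ^ 2) (Θ '' unitCube d) := by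
    refine IntegrableOn.of_bound hKfin (hfc.aestronglyMeasurable hK.measurableSet)
      ((L' * B) ^ 2) ?_
    refine (ae_restrict_iff' hK.measurableSet).2 (Filter.Eventually.of_forall ?_)
    rintro _ ⟨t, ht, rfl⟩
    rw [Real.norm_of_nonneg (by positivity)]
    have h1 := hup t (subset_closure ht)
    have h2 := hB t (subset_closure ht)
    gcongr
    exact h1.trans (by gcongr)
  -- change of variables
  have hinjU : InjOn Θ (unitCube d) := by
    intro s hs t ht hst
    have := hA s (subset_closure hs) t (subset_closure ht)
    rw [hst, dist_self, mul_zero] at this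
    exact dist_le_zero.1 this
  set Ψ := Function.invFunOn Θ (unitCube d) with hΨ
  have hΨΘ : ∀ t ∈ unitCube d, Ψ (Θ t) = t := fun t ht => hinjU.leftInvOn_invFunOn ht
  have hΨL : LipschitzOnWith L' Ψ (Θ '' unitCube d) := by
    refine LipschitzOnWith.of_dist_le_mul ?_
    rintro _ ⟨s, hs, rfl⟩ _ ⟨t, ht, rfl⟩
    rw [hΨΘ s hs, hΨΘ t ht]
    exact hA s (subset_closure hs) t (subset_closure ht)
  have hΨm : AEMeasurable Ψ (volume.restrict (Θ '' unitCube d)) :=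
    hΨL.continuousOn.aemeasurable hK.measurableSet
  have hmeas : (volume : Measure (Euc d)).restrict (unitCube d) ≤
      ((L' : ℝ≥0∞) ^ d) • Measure.map Ψ (volume.restrict (Θ '' unitCube d)) := by
    refine Measure.le_iff.2 fun A hAm => ?_
    rw [Measure.restrict_apply hAm, Measure.smul_apply, smul_eq_mul,
      Measure.map_apply_of_aemeasurable hΨm hAm, Measure.restrict_apply' hK.measurableSet]
    have hsub : Θ '' (A ∩ unitCube d) ⊆ Ψ ⁻¹' A ∩ Θ '' unitCube d := by
      rintro _ ⟨t, ⟨htA, htU⟩, rfl⟩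
      exact ⟨by simpa [hΨΘ t htU] using htA, mem_image_of_mem _ htU⟩
    have himg : Ψ '' (Θ '' (A ∩ unitCube d)) = A ∩ unitCube d := by
      rw [image_image]
      refine (image_congr fun t ht => hΨΘ t ht.2).trans (image_id' _)
    calc volume (A ∩ unitCube d) = volume (Ψ '' (Θ '' (A ∩ unitCube d))) := by rw [himg]
      _ ≤ (L' : ℝ≥0∞) ^ d * volume (Θ '' (A ∩ unitCube d)) :=
        volume_image_le Ψ L' _ (hΨL.mono (image_mono inter_subset_right))
      _ ≤ _ := by gcongr
  have hlint : ∫⁻ t in unitCube d, ENNReal.ofReal (‖fderiv ℝ q t‖ ^ 2) ≤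
      ENNReal.ofReal ((L' : ℝ) ^ d * (L : ℝ) ^ 2) *
        ∫⁻ x in Θ '' unitCube d, ENNReal.ofReal (‖fderiv ℝ v x‖ ^ 2) := by
    have hgm : Measurable fun t : Euc d => ENNReal.ofReal (‖fderiv ℝ q t‖ ^ 2) :=
      ((hqc.norm.pow 2).measurable).ennreal_ofReal
    calc _ ≤ ∫⁻ t, ENNReal.ofReal (‖fderiv ℝ q t‖ ^ 2)
          ∂(((L' : ℝ≥0∞) ^ d) • Measure.map Ψ (volume.restrict (Θ '' unitCube d))) :=
          lintegral_mono' hmeas le_rfl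
      _ = (L' : ℝ≥0∞) ^ d * ∫⁻ x in Θ '' unitCube d,
            ENNReal.ofReal (‖fderiv ℝ q (Ψ x)‖ ^ 2) := by
          rw [lintegral_smul_measure, smul_eq_mul, lintegral_map' hgm.aemeasurable hΨm]
      _ ≤ (L' : ℝ≥0∞) ^ d * ∫⁻ x in Θ '' unitCube d,
            ENNReal.ofReal ((L : ℝ) ^ 2) * ENNReal.ofReal (‖fderiv ℝ v x‖ ^ 2) := by
          refine mul_le_mul_right (setLIntegral_mono' hK.measurableSet ?_) _
          rintro _ ⟨t, ht, rfl⟩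
          rw [hΨΘ t ht, ← ENNReal.ofReal_mul (by positivity), ← mul_pow]
          refine ENNReal.ofReal_le_ofReal ?_
          have := hlow t ht
          gcongr
      _ = _ := by
          rw [lintegral_const_mul' _ _ ENNReal.ofReal_ne_top, ← mul_assoc,
            ENNReal.ofReal_mul (by positivity), ENNReal.ofReal_pow (NNReal.coe_nonneg L'),
            ENNReal.ofReal_coe_nnreal]
  have hqint : IntegrableOn (fun t => ‖fderiv ℝ q t‖ ^ 2) (unitCube d) :=
    ((hqc.norm.pow 2).continuousOn.integrableOn_compact
      (isCompact_closure_unitCube d)).mono_set subset_closure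
  have hreal : ∫ t in unitCube d, ‖fderiv ℝ q t‖ ^ 2 ≤
      ((L' : ℝ) ^ d * (L : ℝ) ^ 2) * ∫ x in Θ '' unitCube d, ‖fderiv ℝ v x‖ ^ 2 := by
    rw [← ofReal_integral_eq_lintegral_ofReal hqint (Filter.Eventually.of_forall fun _ => sq_nonneg _),
      ← ofReal_integral_eq_lintegral_ofReal hint (Filter.Eventually.of_forall fun _ => sq_nonneg _),
      ← ENNReal.ofReal_mul (by positivity)] at hlint
    refine (ENNReal.ofReal_le_ofReal_iff (mul_nonneg (by positivity) ?_)).1 hlint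
    exact integral_nonneg fun _ => sq_nonneg _
  intro x hx
  obtain ⟨t, ht, rfl⟩ := hclK hx
  simp only [norm_gradient_eq]
  have h1 := H q hq t ht
  rw [restrict_closure_cube] at h1
  calc ‖fderiv ℝ v (Θ t)‖ ^ 2 ≤ (L' * ‖fderiv ℝ q t‖) ^ 2 := by
        gcongr; exact hup t ht
    _ = (L' : ℝ) ^ 2 * ‖fderiv ℝ q t‖ ^ 2 := by ring
    _ ≤ (L' : ℝ) ^ 2 * (κ * ∫ t in unitCube d, ‖fderiv ℝ q t‖ ^ 2) := by gcongr
    _ ≤ (L' : ℝ) ^ 2 * (κ * (((L' : ℝ) ^ d * (L : ℝ) ^ 2) *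
          ∫ x in Θ '' unitCube d, ‖fderiv ℝ v x‖ ^ 2)) := by gcongr
    _ = _ := by ring

end CorePart
section FinalPart

/-- affine map of the reference cube onto a box -/
noncomputable def boxMap {d : ℕ} (a b : Fin d → ℝ) (t : Euc d) : Euc d :=
  WithLp.toLp 2 fun i => a i + (b i - a i) * t i

lemma contDiff_boxMap {d : ℕ} (a b : Fin d → ℝ) : ContDiff ℝ 1 (boxMap a b) := by
  refine contDiff_euclidean.2 fun i => ?_
  have h : ContDiff ℝ 1 (fun t : Euc d => t i) :=
    (EuclideanSpace.proj i : Euc d →L[ℝ] ℝ).contDiff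
  exact contDiff_const.add (contDiff_const.mul h)

lemma boxMap_image {d : ℕ} (a b : Fin d → ℝ) (hab : ∀ i, a i < b i) :
    boxMap a b '' unitCube d = {x : Euc d | ∀ i, x i ∈ Ioo (a i) (b i)} := by
  ext x
  constructor
  · rintro ⟨t, ht, rfl⟩ i
    have h1 := ht i
    have h2 := hab i
    simp only [boxMap, mem_Ioo] at h1 ⊢
    constructor <;> nlinarith [h1.1, h1.2]
  · intro hx
    refine ⟨WithLp.toLp 2 fun i => (x i - a i) / (b i - a i), fun i => ?_, ?_⟩
    · have h1 := hx i
      have h2 : 0 < b i - a i := sub_pos.2 (hab i)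
      simp only [mem_Ioo] at h1 ⊢
      constructor
      · exact div_pos (by linarith) h2
      · rw [div_lt_one h2]; linarith
    · ext i
      have h2 : b i - a i ≠ 0 := (sub_pos.2 (hab i)).ne'
      simp only [boxMap]
      field_simp
      ring

lemma dist_boxMap_le {d : ℕ} (a b : Fin d → ℝ) (hab : ∀ i, a i < b i) (m : ℝ) (hm : 0 ≤ m)
    (h : ∀ i, b i - a i ≤ m) (s t : Euc d) :
    dist (boxMap a b s) (boxMap a b t) ≤ m * dist s t := by
  rw [EuclideanSpace.dist_eq, EuclideanSpace.dist_eq, ← Real.sqrt_sq hm,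
    ← Real.sqrt_mul (sq_nonneg _), Finset.mul_sum]
  refine Real.sqrt_le_sqrt (Finset.sum_le_sum fun i _ => ?_)
  rw [← mul_pow]
  have h1 : dist (boxMap a b s i) (boxMap a b t i) = (b i - a i) * dist (s i) (t i) := by
    simp only [boxMap, Real.dist_eq]
    rw [← abs_of_pos (sub_pos.2 (hab i)), ← abs_mul, abs_of_pos (sub_pos.2 (hab i))]
    congr 1; ring
  rw [h1]
  have := sub_pos.2 (hab i)
  have := h i
  gcongr

lemma le_dist_boxMap {d : ℕ} (a b : Fin d → ℝ) (hab : ∀ i, a i < b i) (m : ℝ) (hm : 0 ≤ m)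
    (h : ∀ i, m ≤ b i - a i) (s t : Euc d) :
    m * dist s t ≤ dist (boxMap a b s) (boxMap a b t) := by
  rw [EuclideanSpace.dist_eq, EuclideanSpace.dist_eq, ← Real.sqrt_sq hm,
    ← Real.sqrt_mul (sq_nonneg _), Finset.mul_sum]
  refine Real.sqrt_le_sqrt (Finset.sum_le_sum fun i _ => ?_)
  rw [← mul_pow]
  have h1 : dist (boxMap a b s i) (boxMap a b t i) = (b i - a i) * dist (s i) (t i) := by
    simp only [boxMap, Real.dist_eq]
    rw [← abs_of_pos (sub_pos.2 (hab i)), ← abs_mul, abs_of_pos (sub_pos.2 (hab i))]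
    congr 1; ring
  rw [h1]
  have := h i
  gcongr

lemma side_le_diam {d : ℕ} (a b : Fin d → ℝ) (Q : Set (Euc d))
    (hQ : boxMap a b '' unitCube d = Q) (hb : Bornology.IsBounded Q) (i : Fin d) :
    b i - a i ≤ diam Q := by
  have hc := (contDiff_boxMap a b).continuous
  have h0 : boxMap a b 0 ∈ closure Q := by
    rw [← hQ]
    refine image_closure_subset_closure_image hc (mem_image_of_mem _ ?_)
    rw [mem_closure_unitCube]; simp
  have h1 : boxMap a b (EuclideanSpace.single i 1) ∈ closure Q := by
    rw [← hQ]
    refine image_closure_subset_closure_image hc (mem_image_of_mem _ ?_)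
    rw [mem_closure_unitCube]
    intro j
    by_cases h : j = i <;> simp [h]
  have h2 := dist_le_diam_of_mem hb.closure h1 h0
  rw [diam_closure, dist_eq_norm] at h2
  have h3 := PiLp.norm_apply_le (boxMap a b (EuclideanSpace.single i 1) - boxMap a b 0) i
  have h4 : (boxMap a b (EuclideanSpace.single i 1) - boxMap a b 0) i = b i - a i := by
    simp [boxMap]
  rw [h4, Real.norm_eq_abs] at h3
  exact (le_abs_self _).trans (h3.trans h2)

lemma final_arith (d : ℕ) (hd : d ≠ 0) (κ L c δ h G I : ℝ) (hκ : 0 < κ) (hL : 0 ≤ L)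
    (hc : 0 < c) (hδ : 0 < δ) (hh : 0 < h) (hG : 0 ≤ G) (hI : 0 ≤ I) (hhδ : h ≤ L * δ) :
    κ * (L * (c * δ)⁻¹) ^ 2 * (L * δ) ^ 2 * (L * (c * δ)⁻¹) ^ d * I * (G * h ^ (d - 1)) ≤
      (κ * L ^ 4 * (c⁻¹) ^ 2 * (L * c⁻¹) ^ d * G * L ^ d) * (I / h) := by
  have h1 : h ^ (d - 1) = h ^ d / h := by
    rw [eq_div_iff hh.ne', ← pow_succ, Nat.sub_add_cancel (Nat.one_le_iff_ne_zero.2 hd)]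
  have h2 : (h / δ) ^ d ≤ L ^ d := by
    gcongr
    rwa [div_le_iff₀ hδ]
  rw [h1]
  calc _ = (κ * L ^ 4 * (c⁻¹) ^ 2 * (L * c⁻¹) ^ d * G * (h / δ) ^ d) * (I / h) := by
        have e : L * (c * δ)⁻¹ = (L * c⁻¹) * δ⁻¹ := by rw [mul_inv]; ring
        rw [e, mul_pow (L * c⁻¹) δ⁻¹ d, inv_pow δ, div_pow]
        field_simp
    _ ≤ _ := by gcongr

lemma element_estimate {d p : ℕ} {θ Cshape Cnb CΓ : ℝ} (G : Geom d)
    (M : Mesh d p G θ Cshape Cnb CΓ) (κ : ℝ) (hκ : 0 < κ)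
    (H : ∀ f : Euc d → ℝ, IsQPoly p f → ∀ t ∈ closure (unitCube d),
      ‖fderiv ℝ f t‖ ^ 2 ≤ κ * ∫ x in closure (unitCube d), ‖fderiv ℝ f x‖ ^ 2)
    (Q : Set (Euc d)) (hQ : Q ∈ M.pMesh) (v : Euc d → ℝ) (hv : v ∈ M.Vh) :
    ∫ x in G.ΓK Q, G.dn v x ^ 2 ∂(sMeas d) ≤
      (κ * (G.biLip : ℝ) ^ 4 * (Cshape⁻¹) ^ 2 * ((G.biLip : ℝ) * Cshape⁻¹) ^ d * max CΓ 0 *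
        (G.biLip : ℝ) ^ d) * ∫ x in G.phys Q, ‖gradient v x‖ ^ 2 / M.hsz x := by
  obtain ⟨a, b, hab, hQab⟩ := M.mesh_boxes Q hQ
  have hφQ : boxMap a b '' unitCube d = Q := by rw [boxMap_image a b hab, hQab]
  have hφc := (contDiff_boxMap a b).continuous
  have hQsub := M.mesh_sub Q hQ
  have hQcl : closure Q ⊆ closure (unitCube d) := closure_mono hQsub
  have hQb : Bornology.IsBounded Q :=
    (isCompact_closure_unitCube d).isBounded.subset (subset_closure.trans hQcl)
  have hφcl : MapsTo (boxMap a b) (closure (unitCube d)) (closure Q) := by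
    intro t ht
    rw [← hφQ]
    exact image_closure_subset_closure_image hφc (mem_image_of_mem _ ht)
  have hK : (G.F ∘ boxMap a b) '' unitCube d = G.phys Q := by
    rw [image_comp, hφQ]; rfl
  have hQne : Q.Nonempty := by rw [← hφQ]; exact (unitCube_nonempty d).image _
  -- the element is open
  have hKo : IsOpen (G.phys Q) := by
    have h1 : G.phys Q = G.Ω₀ ∩ G.Finv ⁻¹' Q := by
      ext x
      constructor
      · rintro ⟨y, hy, rfl⟩
        refine ⟨by rw [← G.F_image]; exact mem_image_of_mem _ (hQsub hy), ?_⟩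
        rw [mem_preimage, G.F_leftInv y (subset_closure (hQsub hy))]
        exact hy
      · rintro ⟨hx, hy⟩
        exact ⟨G.Finv x, hy, G.F_rightInv x (subset_closure hx)⟩
    rw [h1]
    refine (G.Finv_lip.continuousOn.mono subset_closure).isOpen_inter_preimage G.Ω₀_open ?_
    have h2 : Q = ⋂ i, {x : Euc d | x i ∈ Ioo (a i) (b i)} := by
      rw [hQab]; ext x; simp
    rw [h2]
    refine isOpen_iInter_of_finite fun i => ?_
    exact isOpen_Ioo.preimage (by fun_prop)
  set δ := diam Q with hδdef
  set h := diam (G.phys Q) with hhdef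
  have hh : 0 < h := by
    obtain ⟨y, hy⟩ := hQne
    rw [hhdef, ← M.hsz_eq Q hQ (G.F y) (mem_image_of_mem _ hy)]
    exact M.hsz_pos _
  have hhδ : h ≤ G.biLip * δ := by
    refine diam_le_of_forall_dist_le (mul_nonneg G.biLip.2 diam_nonneg) ?_
    rintro _ ⟨x, hx, rfl⟩ _ ⟨y, hy, rfl⟩
    refine (G.F_lip.dist_le_mul x (subset_closure (hQsub hx)) y
      (subset_closure (hQsub hy))).trans ?_
    gcongr
    exact dist_le_diam_of_mem hQb hx hy
  have hδ : 0 < δ := by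
    refine lt_of_le_of_ne diam_nonneg fun h0 => ?_
    rw [← h0, mul_zero] at hhδ
    linarith
  have hd : d ≠ 0 := by
    rintro rfl
    have : h = 0 := diam_subsingleton (Set.subsingleton_of_subsingleton)
    linarith
  have hc := M.shape_pos
  have hlo := M.shape_reg Q hQ a b hQab
  -- Lipschitz constants of the composed map
  let L : ℝ≥0 := G.biLip * ⟨δ, hδ.le⟩
  let L' : ℝ≥0 := G.biLip * ⟨(Cshape * δ)⁻¹, by positivity⟩
  have hLc : (L : ℝ) = G.biLip * δ := rfl
  have hLc' : (L' : ℝ) = G.biLip * (Cshape * δ)⁻¹ := rfl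
  have hΘs : ContDiffOn ℝ 1 (G.F ∘ boxMap a b) (closure (unitCube d)) :=
    ((M.F_smooth Q hQ).of_le (by exact_mod_cast le_top)).comp
      (contDiff_boxMap a b).contDiffOn hφcl
  have hΘL : LipschitzOnWith L (G.F ∘ boxMap a b) (closure (unitCube d)) := by
    refine LipschitzOnWith.of_dist_le_mul fun s hs t ht => ?_
    rw [hLc, mul_assoc]
    refine (G.F_lip.dist_le_mul _ (hQcl (hφcl hs)) _ (hQcl (hφcl ht))).trans ?_
    gcongr
    exact dist_boxMap_le a b hab δ hδ.le (side_le_diam a b Q hφQ hQb) s t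
  have hFcl : ∀ y ∈ closure (unitCube d), G.F y ∈ closure G.Ω₀ := by
    intro y hy
    rw [← G.F_image]
    exact G.F_lip.continuousOn.image_closure (mem_image_of_mem _ hy)
  have hΘA : ∀ s ∈ closure (unitCube d), ∀ t ∈ closure (unitCube d),
      dist s t ≤ L' * dist ((G.F ∘ boxMap a b) s) ((G.F ∘ boxMap a b) t) := by
    intro s hs t ht
    have h1 := le_dist_boxMap a b hab (Cshape * δ) (by positivity) hlo s t
    have h2 := G.Finv_lip.dist_le_mul _ (hFcl _ (hQcl (hφcl hs))) _ (hFcl _ (hQcl (hφcl ht)))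
    rw [G.F_leftInv _ (hQcl (hφcl hs)), G.F_leftInv _ (hQcl (hφcl ht))] at h2
    have h3 := h1.trans h2
    rw [hLc']
    calc dist s t = (Cshape * δ)⁻¹ * (Cshape * δ * dist s t) := by field_simp
      _ ≤ (Cshape * δ)⁻¹ * (G.biLip * dist (G.F (boxMap a b s)) (G.F (boxMap a b t))) := by
        gcongr
      _ = _ := by simp only [Function.comp]; ring
  obtain ⟨f, hf, hfv⟩ := M.vh_poly v hv Q hQ
  have hcore := core_estimate κ hκ H (G.F ∘ boxMap a b) L L' hΘs hΘL hΘA (by rwa [hK]) v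
    (by rw [hK]; exact (M.vh_smooth v hv Q hQ).of_le (by exact_mod_cast le_top))
    (f ∘ boxMap a b) (isQPoly_affine hf a (fun i => b i - a i)) (by
      intro t ht
      exact hfv (by rw [← hφQ]; exact mem_image_of_mem _ ht))
  rw [hK, hLc, hLc'] at hcore
  set I := ∫ x in G.phys Q, ‖gradient v x‖ ^ 2 with hIdef
  have hI : 0 ≤ I := integral_nonneg fun _ => sq_nonneg _
  have hRHS : ∫ x in G.phys Q, ‖gradient v x‖ ^ 2 / M.hsz x = I / h := by
    rw [hIdef, ← integral_div]
    refine setIntegral_congr_fun hKo.measurableSet fun x hx => ?_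
    simp only [M.hsz_eq Q hQ x hx, hhdef]
  rw [hRHS]
  refine le_trans ?_ (final_arith d hd κ G.biLip Cshape δ h (max CΓ 0) I hκ G.biLip.2 hc hδ hh
    (le_max_right _ _) hI hhδ)
  set B := κ * (G.biLip * (Cshape * δ)⁻¹ : ℝ) ^ 2 * (G.biLip * δ : ℝ) ^ 2 *
    (G.biLip * (Cshape * δ)⁻¹ : ℝ) ^ d * I with hBdef
  have hB : 0 ≤ B := by positivity
  have hT : MeasurableSet (frontier G.Ω ∩ closure (G.phys Q)) :=
    (isClosed_frontier.inter isClosed_closure).measurableSet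
  have hsubT : G.ΓK Q ⊆ frontier G.Ω ∩ closure (G.phys Q) :=
    inter_subset_inter_left _ G.ΓD_sub
  have hae : ∀ᵐ x ∂((sMeas d).restrict (G.ΓK Q)), ‖G.dn v x ^ 2‖ ≤ B := by
    refine ae_restrict_of_ae_restrict_of_subset hsubT ?_
    refine (ae_restrict_iff' hT).2 (Filter.Eventually.of_forall fun x hx => ?_)
    rw [Real.norm_of_nonneg (sq_nonneg _)]
    refine le_trans ?_ (hcore x hx.2)
    have h1 : |G.dn v x| ≤ ‖gradient v x‖ := by
      refine (abs_real_inner_le_norm _ _).trans ?_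
      rw [G.nrm_unit x hx.1, mul_one]
    rw [← sq_abs]
    gcongr
  have hμ := M.ΓK_bound Q hQ
  haveI : IsFiniteMeasure ((sMeas d).restrict (G.ΓK Q)) :=
    ⟨by rw [Measure.restrict_apply_univ]; exact hμ.trans_lt ENNReal.ofReal_lt_top⟩
  have h1 := norm_integral_le_of_norm_le_const hae
  have h2 : ((sMeas d).restrict (G.ΓK Q)).real univ ≤ max CΓ 0 * h ^ (d - 1) := by
    rw [measureReal_def, Measure.restrict_apply_univ]
    refine ENNReal.toReal_le_of_le_ofReal (by positivity) (hμ.trans ?_)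
    refine ENNReal.ofReal_le_ofReal ?_
    gcongr
    exact le_max_left _ _
  calc _ ≤ _ := (Real.le_norm_self _).trans h1
    _ ≤ _ := by gcongr

end FinalPart

noncomputable section

/-- Corollary A.2.  There exists `C > 0`, depending on `Γ_D`
but independent of how the mesh intersects the boundary, such that for every
element `K ∈ M_{0,h}` and every `v_h ∈ Ṽ_h`,
`‖∂v_h/∂n‖_{L²(Γ_K)} ≤ C ‖h^{-1/2} ∇v_h‖_{L²(K)}`, where `Γ_K = Γ_D ∩ cl(K)`.
The spline space satisfies the standard inverse inequality
`‖D²v_h‖_{L²(K)} ≤ C_inv ‖h⁻¹ ∇v_h‖_{L²(K)}` (a consequence of shape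
regularity of the untrimmed mesh), stated here as a hypothesis with an
explicit constant. -/
theorem normal_derivative_trace_inequality
    {d p : ℕ} {θ Cshape Cnb CΓ : ℝ} (G : Geom d) {ι : Type}
    (M : ι → Mesh d p G θ Cshape Cnb CΓ)
    (Cinv : ℝ) (hCinv : 0 < Cinv)
    (hinv : ∀ i, ∀ Q ∈ (M i).pMesh, ∀ v ∈ (M i).Vh,
      Real.sqrt (∫ x in G.phys Q, ‖iteratedFDeriv ℝ 2 v x‖ ^ 2)
        ≤ Cinv * Real.sqrt (∫ x in G.phys Q, ‖gradient v x‖ ^ 2 / (M i).hsz x ^ 2)) :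
    ∃ C > (0 : ℝ), ∀ i, ∀ Q ∈ (M i).pMesh, ∀ v ∈ (M i).Vh,
      Real.sqrt (∫ x in G.ΓK Q, G.dn v x ^ 2 ∂(sMeas d))
        ≤ C * Real.sqrt (∫ x in G.phys Q, ‖gradient v x‖ ^ 2 / (M i).hsz x) := by
  obtain ⟨κ, hκ, H⟩ := poly_grad_sup_le (d := d) p
  set D : ℝ := κ * (G.biLip : ℝ) ^ 4 * (Cshape⁻¹) ^ 2 * ((G.biLip : ℝ) * Cshape⁻¹) ^ d *
    max CΓ 0 * (G.biLip : ℝ) ^ d with hD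
  refine ⟨√D + 1, by positivity, fun i Q hQ v hv => ?_⟩
  have h1 := element_estimate G (M i) κ hκ H Q hQ v hv
  have hc := (M i).shape_pos
  have hD0 : 0 ≤ D := by positivity
  calc _ ≤ √(D * ∫ x in G.phys Q, ‖gradient v x‖ ^ 2 / (M i).hsz x) := Real.sqrt_le_sqrt h1
    _ = √D * √(∫ x in G.phys Q, ‖gradient v x‖ ^ 2 / (M i).hsz x) := Real.sqrt_mul hD0 _
    _ ≤ _ := by
      gcongr
      linarith

end
end
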